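/- arXiv:2109.03288 — 2 statements merged into one kernel-verified Lean document; each statement's English description precedes it below -/
import Mathlib

section
/- Let q be an odd prime and m a divisor of q−1. Then the limit lim_{x→∞} ( log x − ((q−1)/m)·∑_{n ≤ x, n^m ≡ 1 (mod q)} Λ(n)/n ) exists and equals γ + ∑_{χ ∈ X_m^*} (L'/L)(1, χ) + log q/(q−1), i.e. equals γ_{K_m} + log q/(q−1); here Λ denotes the von Mangoldt function. -/
open Filter Topology

/-- The Dirichlet L-function attached to a Dirichlet character mod `q` (junk value for `q = 0`). -/
noncomputable def Lfun {q : ℕ} (χ : DirichletCharacter ℂ q) (s : ℂ) : ℂ :=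
  if h : q = 0 then 0 else
    haveI : NeZero q := ⟨h⟩
    DirichletCharacter.LFunction χ s

/-- `γ_{K_m} = γ + ∑_{χ ∈ X_m^*} (L'/L)(1,χ)`, the Euler–Kronecker constant of the unique
subfield of `ℚ(ζ_q)` of degree `(q-1)/m`; here `X_m^*` is the set of nonprincipal Dirichlet
characters mod `q` that are trivial on the group `C_m` of `m`-th roots of unity mod `q`. -/
noncomputable def gammaK (q m : ℕ) : ℝ :=
  Real.eulerMascheroniConstant +
    (∑ᶠ χ ∈ {χ : DirichletCharacter ℂ q | χ ≠ 1 ∧ ∀ a : ZMod q, a ^ m = 1 → χ a = 1},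
      deriv (Lfun χ) 1 / Lfun χ 1).re

section Tauberian

open MeasureTheory Set Real
open scoped SchwartzMap FourierTransform NNReal

/-- Parseval-type identity expressing a smoothed exponentially damped function through its
Laplace transform on a vertical line. -/
lemma integral_mul_exp_mul_fourier_eq (φ : 𝓢(ℝ, ℂ)) {W : ℝ → ℂ} {ε : ℝ}
    (hint : IntegrableOn (fun t : ℝ => W t * Complex.exp (-(ε * t))) (Ioi 0)) (T : ℝ) :
    ∫ t in Ioi (0 : ℝ), W t * Complex.exp (-(ε * t)) * 𝓕 φ (t - T) =
      ∫ y : ℝ, Complex.exp (2 * π * y * T * Complex.I) * φ y *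
        ∫ t in Ioi (0 : ℝ), W t * Complex.exp (-((ε + 2 * π * y * Complex.I) * t)) := by
  have hmod : Integrable (fun y : ℝ => Complex.exp (2 * π * y * T * Complex.I) * φ y) := by
    refine φ.integrable.bdd_mul (c := 1) (by fun_prop) (ae_of_all _ fun y => ?_)
    rw [show (2 * π * y * T * Complex.I : ℂ) = ((2 * π * y * T : ℝ) : ℂ) * Complex.I by
      push_cast; ring, Complex.norm_exp_ofReal_mul_I]
  have hF := hint
  rw [← integrable_indicator_iff measurableSet_Ioi] at hF
  have key := VectorFourier.integral_fourierIntegral_smul_eq_flip (L := innerₗ ℝ)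
    Real.continuous_fourierChar continuous_inner hmod hF
  have e1 : ∀ t : ℝ, VectorFourier.fourierIntegral 𝐞 volume (innerₗ ℝ)
      (fun y : ℝ => Complex.exp (2 * π * y * T * Complex.I) * φ y) t = 𝓕 φ (t - T) := by
    intro t
    rw [SchwartzMap.fourier_coe, Real.fourier_real_eq_integral_exp_smul]
    change ∫ v : ℝ, 𝐞 (-(inner ℝ v t)) • _ = _
    refine integral_congr_ae (ae_of_all _ fun v => ?_)
    simp only [Circle.smul_def, Real.fourierChar_apply, smul_eq_mul, ← mul_assoc, ← Complex.exp_add]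
    congr 2
    simp
    ring
  have e2 : ∀ y : ℝ, VectorFourier.fourierIntegral 𝐞 volume (innerₗ ℝ).flip
      ((Ioi (0 : ℝ)).indicator fun t : ℝ => W t * Complex.exp (-(ε * t))) y =
      ∫ t in Ioi (0 : ℝ), W t * Complex.exp (-((ε + 2 * π * y * Complex.I) * t)) := by
    intro y
    rw [← integral_indicator measurableSet_Ioi]
    change ∫ v : ℝ, 𝐞 (-(inner ℝ y v)) • _ = _
    refine integral_congr_ae (ae_of_all _ fun v => ?_)
    by_cases hv : v ∈ Ioi (0 : ℝ)
    · simp only [indicator_of_mem hv, Circle.smul_def, Real.fourierChar_apply, smul_eq_mul]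
      rw [mul_left_comm, ← Complex.exp_add]
      congr 2
      simp
      ring
    · simp [indicator_of_notMem hv]
  simp only [e1, e2, smul_eq_mul] at key
  rw [← key, ← integral_indicator measurableSet_Ioi]
  refine integral_congr_ae (ae_of_all _ fun t => ?_)
  by_cases ht : t ∈ Ioi (0 : ℝ)
  · simp only [indicator_of_mem ht]; ring
  · simp [indicator_of_notMem ht]

lemma norm_le_of_lipschitzWith {M : ℝ≥0} {W : ℝ → ℂ} (hW : LipschitzWith M W) (t : ℝ) :
    ‖W t‖ ≤ ‖W 0‖ + M * |t| := by
  have h := hW.dist_le_mul t 0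
  rw [dist_eq_norm, dist_zero_right, Real.norm_eq_abs] at h
  linarith [norm_le_norm_add_norm_sub (W 0) (W t), norm_sub_rev (W 0) (W t)]

lemma integrableOn_mul_exp_of_lipschitzWith {M : ℝ≥0} {W : ℝ → ℂ} (hW : LipschitzWith M W)
    {z : ℂ} (hz : 0 < z.re) :
    IntegrableOn (fun t : ℝ => W t * Complex.exp (-(z * t))) (Ioi 0) := by
  have h0 : IntegrableOn (fun t : ℝ => ‖W 0‖ * rexp (-z.re * t) + M * (t * rexp (-z.re * t)))
      (Ioi 0) := by
    refine ((integrableOn_exp_mul_Ioi (by linarith) 0).const_mul _).add (Integrable.const_mul ?_ _)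
    have := integrableOn_rpow_mul_exp_neg_mul_rpow (s := 1) (p := 1) (by norm_num) one_pos hz
    simpa [IntegrableOn] using this
  refine Integrable.mono' h0 ?_ ?_
  · have := hW.continuous
    exact Continuous.aestronglyMeasurable (by fun_prop)
  · refine (ae_restrict_iff' measurableSet_Ioi).mpr (ae_of_all _ fun t (ht : 0 < t) => ?_)
    have hn := norm_le_of_lipschitzWith hW t
    rw [abs_of_pos ht] at hn
    rw [norm_mul, Complex.norm_exp]
    have : (-(z * (t : ℂ))).re = -z.re * t := by simp
    rw [this]
    nlinarith [Real.exp_pos (-z.re * t)]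

lemma integrable_norm_mul_schwartz {M : ℝ≥0} {W : ℝ → ℂ} (hW : LipschitzWith M W)
    (K : 𝓢(ℝ, ℂ)) (T : ℝ) : Integrable (fun t => W t * K (t - T)) := by
  have hc := hW.continuous
  have h0 : Integrable (fun u : ℝ => (‖W 0‖ + M * |T|) * ‖K u‖ + M * (‖u‖ ^ 1 * ‖K u‖)) :=
    (K.integrable.norm.const_mul _).add ((K.integrable_pow_mul volume 1).const_mul _)
  refine Integrable.mono' (h0.comp_sub_right T) (by fun_prop) (ae_of_all _ fun t => ?_)
  have hn := norm_le_of_lipschitzWith hW t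
  have h2 : |t| ≤ |T| + |t - T| := by
    calc |t| = |T + (t - T)| := by ring_nf
      _ ≤ _ := abs_add_le _ _
  rw [norm_mul]
  simp only [pow_one, Real.norm_eq_abs]
  have h3 : ‖W t‖ ≤ ‖W 0‖ + M * |T| + M * |t - T| := by
    nlinarith [M.coe_nonneg, mul_le_mul_of_nonneg_left h2 M.coe_nonneg]
  nlinarith [norm_nonneg (K (t - T)), mul_le_mul_of_nonneg_right h3 (norm_nonneg (K (t - T)))]

/-- Smoothing a Lipschitz function whose Laplace transform is continuous up to the imaginary axis
by the Fourier transform of a compactly supported function gives a function tending to `0`. -/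
lemma tendsto_integral_mul_fourier_of_laplace {M : ℝ≥0} {W : ℝ → ℂ} (hW : LipschitzWith M W)
    {k : ℂ → ℂ} (hk : ContinuousOn k {z | 0 ≤ z.re})
    (hlap : ∀ z : ℂ, 0 < z.re → ∫ t in Ioi (0 : ℝ), W t * Complex.exp (-(z * t)) = k z)
    (φ : 𝓢(ℝ, ℂ)) (hφ : HasCompactSupport φ) :
    Tendsto (fun T : ℝ => ∫ t in Ioi (0 : ℝ), W t * 𝓕 φ (t - T)) atTop (𝓝 0) := by
  have key : ∀ T : ℝ, ∫ t in Ioi (0 : ℝ), W t * 𝓕 φ (t - T) =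
      ∫ y : ℝ, Complex.exp (2 * π * y * T * Complex.I) * φ y * k (2 * π * y * Complex.I) := by
    intro T
    have hL : Tendsto (fun ε : ℝ => ∫ t in Ioi (0 : ℝ),
        W t * Complex.exp (-(ε * t)) * 𝓕 φ (t - T)) (𝓝[>] 0)
        (𝓝 (∫ t in Ioi (0 : ℝ), W t * 𝓕 φ (t - T))) := by
      have hi := (integrable_norm_mul_schwartz hW (𝓕 φ) T).norm.integrableOn (s := Ioi 0)
      refine tendsto_integral_filter_of_dominated_convergence _ ?_ ?_ hi ?_
      · have := hW.continuous
        exact Eventually.of_forall fun ε => Continuous.aestronglyMeasurable (by fun_prop)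
      · filter_upwards [self_mem_nhdsWithin] with ε (hε : 0 < ε)
        refine (ae_restrict_iff' measurableSet_Ioi).mpr (ae_of_all _ fun t (ht : 0 < t) => ?_)
        rw [mul_right_comm, norm_mul, Complex.norm_exp]
        refine mul_le_of_le_one_right (norm_nonneg _) (Real.exp_le_one_iff.mpr ?_)
        simp
        positivity
      · refine ae_of_all _ fun t => ?_
        have : Continuous fun ε : ℝ => W t * Complex.exp (-(ε * t)) * 𝓕 φ (t - T) := by fun_prop
        have h := this.tendsto 0
        simp only [Complex.ofReal_zero, zero_mul, neg_zero, Complex.exp_zero, mul_one] at h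
        exact h.mono_left nhdsWithin_le_nhds
    have hR : Tendsto (fun ε : ℝ => ∫ y : ℝ, Complex.exp (2 * π * y * T * Complex.I) * φ y *
        k (ε + 2 * π * y * Complex.I)) (𝓝[>] 0)
        (𝓝 (∫ y : ℝ, Complex.exp (2 * π * y * T * Complex.I) * φ y *
          k (2 * π * y * Complex.I))) := by
      have hkc : ∀ y : ℝ, ContinuousOn (fun ε : ℝ => k (ε + 2 * π * y * Complex.I)) (Ici 0) :=
        fun y => hk.comp (by fun_prop) fun ε hε => by simpa using hε
      have hkc' : ∀ ε : ℝ, 0 ≤ ε → Continuous (fun y : ℝ => k (ε + 2 * π * y * Complex.I)) :=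
        fun ε hε => hk.comp_continuous (by fun_prop) fun y => by simpa using hε
      have hcomp : IsCompact (Icc (0 : ℝ) 1 ×ˢ tsupport φ) := isCompact_Icc.prod hφ
      have hcont2 : ContinuousOn (fun p : ℝ × ℝ => k (p.1 + 2 * π * p.2 * Complex.I))
          (Icc (0 : ℝ) 1 ×ˢ tsupport φ) :=
        hk.comp (by fun_prop) fun p hp => by simpa using hp.1.1
      obtain ⟨C, hC⟩ := hcomp.exists_bound_of_continuousOn hcont2
      refine tendsto_integral_filter_of_dominated_convergence (fun y => ‖φ y‖ * C) ?_ ?_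
        (φ.integrable.norm.mul_const C) ?_
      · filter_upwards [self_mem_nhdsWithin] with ε (hε : 0 < ε)
        exact (Continuous.mul (by fun_prop) (hkc' ε hε.le)).aestronglyMeasurable
      · filter_upwards [Ioo_mem_nhdsGT (zero_lt_one' ℝ)] with ε hε
        refine ae_of_all _ fun y => ?_
        rw [norm_mul, norm_mul, show (2 * π * y * T * Complex.I : ℂ) =
          ((2 * π * y * T : ℝ) : ℂ) * Complex.I by push_cast; ring,
          Complex.norm_exp_ofReal_mul_I, one_mul]
        by_cases hy : y ∈ tsupport φ
        · exact mul_le_mul_of_nonneg_left (hC (ε, y) ⟨⟨hε.1.le, hε.2.le⟩, hy⟩) (norm_nonneg _)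
        · simp [image_eq_zero_of_notMem_tsupport hy]
      · refine ae_of_all _ fun y => ?_
        have h := ((hkc y) 0 self_mem_Ici).tendsto.mono_left (nhdsWithin_mono 0 Ioi_subset_Ici_self)
        simp only [Complex.ofReal_zero, zero_add] at h
        exact h.const_mul _
    refine tendsto_nhds_unique (hL.congr' ?_) hR
    filter_upwards [self_mem_nhdsWithin] with ε (hε : 0 < ε)
    rw [integral_mul_exp_mul_fourier_eq φ
      (integrableOn_mul_exp_of_lipschitzWith hW (z := ε) (by simpa using hε)) T]
    refine integral_congr_ae (ae_of_all _ fun y => ?_)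
    simp only
    rw [hlap _ (by simpa using hε)]
  simp_rw [key]
  have hRL := (Real.tendsto_integral_exp_smul_cocompact
    (fun y : ℝ => φ y * k (2 * π * y * Complex.I))).comp
      ((tendsto_neg_atTop_atBot (G := ℝ)).mono_right atBot_le_cocompact)
  refine hRL.congr fun T => integral_congr_ae (ae_of_all _ fun y => ?_)
  simp only [Circle.smul_def, Real.fourierChar_apply, smul_eq_mul]
  rw [← mul_assoc]
  congr 3
  push_cast
  ring

lemma tendsto_integral_Iic_mul_schwartz {M : ℝ≥0} {W : ℝ → ℂ} (hW : LipschitzWith M W)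
    (K : 𝓢(ℝ, ℂ)) :
    Tendsto (fun T : ℝ => ∫ t in Iic (0 : ℝ), W t * K (t - T)) atTop (𝓝 0) := by
  have hc := hW.continuous
  have h1 : ∀ T : ℝ, ∫ t in Iic (0 : ℝ), W t * K (t - T) =
      ∫ u : ℝ, (Iic (-T)).indicator (fun u => W (u + T) * K u) u := by
    intro T
    rw [← integral_indicator measurableSet_Iic, ← integral_sub_right_eq_self
      (fun u => (Iic (-T)).indicator (fun u => W (u + T) * K u) u) T]
    refine integral_congr_ae (ae_of_all _ fun t => ?_)
    by_cases ht : t ≤ 0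
    · simp [indicator, ht]
    · simp [indicator, ht]
  simp_rw [h1]
  have h0 : Integrable (fun u : ℝ => ‖W 0‖ * ‖K u‖ + M * (‖u‖ ^ 1 * ‖K u‖)) :=
    (K.integrable.norm.const_mul _).add ((K.integrable_pow_mul volume 1).const_mul _)
  rw [show (0 : ℂ) = ∫ _ : ℝ, (0 : ℂ) by simp]
  refine tendsto_integral_filter_of_dominated_convergence _ ?_ ?_ h0 ?_
  · exact Eventually.of_forall fun T =>
      (Continuous.aestronglyMeasurable (by fun_prop)).indicator measurableSet_Iic
  · filter_upwards [eventually_ge_atTop 0] with T hT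
    refine ae_of_all _ fun u => ?_
    by_cases hu : u ∈ Iic (-T)
    · rw [indicator_of_mem hu, norm_mul]
      rw [mem_Iic] at hu
      have hn := norm_le_of_lipschitzWith hW (u + T)
      rw [abs_of_nonpos (by linarith)] at hn
      have h3 : ‖W (u + T)‖ ≤ ‖W 0‖ + M * ‖u‖ := by
        rw [Real.norm_eq_abs, abs_of_nonpos (by linarith)]
        nlinarith [M.coe_nonneg]
      nlinarith [mul_le_mul_of_nonneg_right h3 (norm_nonneg (K u))]
    · rw [indicator_of_notMem hu, norm_zero]
      positivity
  · refine ae_of_all _ fun u => tendsto_const_nhds.congr' ?_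
    filter_upwards [eventually_gt_atTop (-u)] with T hT
    rw [indicator_of_notMem (by rw [mem_Iic]; linarith)]

lemma eventually_norm_le_of_laplace {M : ℝ≥0} {W : ℝ → ℂ} (hW : LipschitzWith M W)
    {k : ℂ → ℂ} (hk : ContinuousOn k {z | 0 ≤ z.re})
    (hlap : ∀ z : ℂ, 0 < z.re → ∫ t in Ioi (0 : ℝ), W t * Complex.exp (-(z * t)) = k z)
    (φ : 𝓢(ℝ, ℂ)) (hφ : HasCompactSupport φ) (hφ0 : φ 0 = 1) {δ : ℝ} (hδ : 0 < δ) :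
    ∀ᶠ T in atTop, ‖W T‖ ≤ M * (∫ u : ℝ, ‖u‖ * ‖𝓕 φ u‖) + δ := by
  set K := 𝓕 φ with hK
  have hc := hW.continuous
  have hK1 : ∫ u : ℝ, K u = 1 := by
    have h : 𝓕⁻ K = φ := FourierTransform.fourierInv_fourier_eq φ
    have h2 := congrArg (fun f : 𝓢(ℝ, ℂ) => f 0) h
    simp only [SchwartzMap.fourierInv_coe, Real.fourierInv_eq', hφ0] at h2
    simpa using h2
  have hlim := (tendsto_integral_mul_fourier_of_laplace hW hk hlap φ hφ).add
    (tendsto_integral_Iic_mul_schwartz hW K)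
  rw [add_zero] at hlim
  filter_upwards [(tendsto_zero_iff_norm_tendsto_zero.mp hlim).eventually_le_const hδ] with T hT
  have hint := integrable_norm_mul_schwartz hW K T
  have hintT : Integrable (fun t => W T * K (t - T)) := (K.integrable.comp_sub_right T).const_mul _
  have hsplit : (∫ t in Ioi (0 : ℝ), W t * K (t - T)) + ∫ t in Iic (0 : ℝ), W t * K (t - T) =
      ∫ t : ℝ, W t * K (t - T) := by
    rw [add_comm, intervalIntegral.integral_Iic_add_Ioi hint.integrableOn hint.integrableOn]
  rw [← hK, hsplit] at hT
  have hWT : W T = (∫ t : ℝ, (W T * K (t - T) - W t * K (t - T))) + ∫ t : ℝ, W t * K (t - T) := by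
    rw [integral_sub hintT hint, sub_add_cancel, integral_const_mul,
      integral_sub_right_eq_self (fun u => K u) T, hK1, mul_one]
  rw [hWT]
  refine (norm_add_le _ _).trans (add_le_add ?_ hT)
  have hb : Integrable (fun u : ℝ => ‖u‖ * ‖K u‖) := by
    simpa using K.integrable_pow_mul volume 1
  rw [← integral_const_mul, ← integral_sub_right_eq_self (fun u => M * (‖u‖ * ‖K u‖)) T]
  refine norm_integral_le_of_norm_le ((hb.const_mul _).comp_sub_right T) (ae_of_all _ fun t => ?_)
  rw [← sub_mul, norm_mul, ← mul_assoc]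
  refine mul_le_mul_of_nonneg_right ?_ (norm_nonneg _)
  have := hW.dist_le_mul T t
  rwa [dist_eq_norm, dist_eq_norm, norm_sub_rev T t] at this

lemma exists_schwartz_hasCompactSupport :
    ∃ φ : 𝓢(ℝ, ℂ), HasCompactSupport φ ∧ φ 0 = 1 := by
  let b : ContDiffBump (0 : ℝ) := ⟨1, 2, one_pos, one_lt_two⟩
  have h1 : HasCompactSupport (fun x => (b x : ℂ)) :=
    b.hasCompactSupport.comp_left Complex.ofReal_zero
  refine ⟨h1.toSchwartzMap (Complex.ofRealCLM.contDiff.comp b.contDiff), h1, ?_⟩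
  change ((b 0 : ℝ) : ℂ) = 1
  rw [b.one_of_mem_closedBall (by simp [b.rIn_pos.le]), Complex.ofReal_one]

/-- A Lipschitz function whose Laplace transform extends continuously to the closed right
half-plane tends to zero at infinity. -/
theorem tendsto_zero_of_lipschitzWith_of_laplace {M : ℝ≥0} {W : ℝ → ℂ} (hW : LipschitzWith M W)
    {k : ℂ → ℂ} (hk : ContinuousOn k {z | 0 ≤ z.re})
    (hlap : ∀ z : ℂ, 0 < z.re → ∫ t in Ioi (0 : ℝ), W t * Complex.exp (-(z * t)) = k z) :
    Tendsto W atTop (𝓝 0) := by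
  obtain ⟨φ, hφ, hφ0⟩ := exists_schwartz_hasCompactSupport
  set B := ∫ u : ℝ, ‖u‖ * ‖𝓕 φ u‖ with hB
  have hB0 : 0 ≤ B := integral_nonneg fun u => by positivity
  rw [Metric.tendsto_atTop']
  intro δ hδ
  obtain ⟨R, hR⟩ : ∃ R : ℝ≥0, 0 < R ∧ M * B / R < δ / 2 := by
    obtain ⟨n, hn⟩ := exists_nat_gt (M * B / (δ / 2))
    have hn0 : (0 : ℝ) < n := lt_of_le_of_lt (by positivity) hn
    refine ⟨n, by exact_mod_cast hn0, ?_⟩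
    rw [div_lt_iff₀ (by positivity)] at hn
    rw [NNReal.coe_natCast, div_lt_iff₀ hn0]
    linarith
  have hR0 : (0 : ℝ) < R := hR.1
  have hWR : LipschitzWith (M * R⁻¹) (fun t => W (t * (R : ℝ)⁻¹)) := by
    refine hW.comp (LipschitzWith.of_dist_le_mul fun x y => ?_)
    rw [Real.dist_eq, Real.dist_eq, ← sub_mul, abs_mul, abs_of_pos (inv_pos.mpr hR0), mul_comm]
    simp
  have hkR : ContinuousOn (fun z : ℂ => R * k (R * z)) {z | 0 ≤ z.re} := by
    refine continuousOn_const.mul (hk.comp (by fun_prop) fun z (hz : 0 ≤ z.re) => ?_)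
    simp only [mem_ofPred_eq, Complex.re_ofReal_mul]
    positivity
  have hlapR : ∀ z : ℂ, 0 < z.re →
      ∫ t in Ioi (0 : ℝ), W (t * (R : ℝ)⁻¹) * Complex.exp (-(z * t)) = R * k (R * z) := by
    intro z hz
    rw [← hlap (R * z) (by rw [Complex.re_ofReal_mul]; positivity)]
    have := integral_comp_mul_right_Ioi
      (fun t : ℝ => W t * Complex.exp (-(R * z * t))) 0 (inv_pos.mpr hR0)
    rw [zero_mul, inv_inv] at this
    rw [← Complex.real_smul, ← this]
    refine integral_congr_ae (ae_of_all _ fun t => ?_)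
    simp only
    congr 3
    have : ((R : ℝ) : ℂ) ≠ 0 := by exact_mod_cast hR0.ne'
    push_cast
    field_simp
  have hev := eventually_norm_le_of_laplace hWR hkR hlapR φ hφ hφ0 (half_pos hδ)
  obtain ⟨T₀, hT₀⟩ := eventually_atTop.mp hev
  refine ⟨T₀ / R, fun t ht => ?_⟩
  have h := hT₀ (t * R) ((div_lt_iff₀ hR0).mp ht).le
  rw [mul_assoc, mul_inv_cancel₀ hR0.ne', mul_one] at h
  rw [dist_zero_right]
  refine h.trans_lt ?_
  have : ((M * R⁻¹ : ℝ≥0) : ℝ) * B = M * B / R := by push_cast; field_simp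
  rw [← hB, this]
  linarith [hR.2]

lemma lipschitzWith_intervalIntegral {f : ℝ → ℂ} (hf : Measurable f) {M : ℝ≥0}
    (hM : ∀ t, ‖f t‖ ≤ M) : LipschitzWith M (fun T => ∫ t in (0 : ℝ)..T, f t) := by
  have hii : ∀ a b : ℝ, IntervalIntegrable f volume a b := fun a b =>
    (intervalIntegrable_const (c := (M : ℝ))).mono_fun hf.aestronglyMeasurable
      (ae_of_all _ fun t => by simpa using hM t)
  refine LipschitzWith.of_dist_le_mul fun x y => ?_
  rw [dist_eq_norm, intervalIntegral.integral_interval_sub_left (hii _ _) (hii _ _), Real.dist_eq]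
  exact intervalIntegral.norm_integral_le_of_norm_le_const fun t _ => hM t

lemma integral_exp_neg_mul_Ioi {z : ℂ} (hz : 0 < z.re) :
    ∫ t in Ioi (0 : ℝ), Complex.exp (-(z * t)) = 1 / z := by
  have := integral_exp_mul_complex_Ioi (a := -z) (by simpa using hz) 0
  simpa [neg_div_neg_eq] using this

/-- The Laplace transform of a primitive. -/
lemma laplace_intervalIntegral {f : ℝ → ℂ} (hf : Measurable f) {M : ℝ≥0}
    (hM : ∀ t, ‖f t‖ ≤ M) {z : ℂ} (hz : 0 < z.re) :
    ∫ t in Ioi (0 : ℝ), (∫ u in (0 : ℝ)..t, f u) * Complex.exp (-(z * t)) =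
      (∫ t in Ioi (0 : ℝ), f t * Complex.exp (-(z * t))) / z := by
  have h1 : IntegrableOn (fun t : ℝ => Complex.exp (-(z * t))) (Ioi 0) := by
    simpa using integrableOn_mul_exp_of_lipschitzWith (LipschitzWith.const (1 : ℂ)) hz
  have h2 : IntegrableOn (fun t : ℝ => f t * Complex.exp (-(z * t))) (Ioi 0) :=
    Integrable.bdd_mul h1 hf.aestronglyMeasurable (ae_of_all _ hM)
  have := integral_posConvolution h2 h1 (ContinuousLinearMap.mul ℝ ℂ)
  simp only [ContinuousLinearMap.mul_apply'] at this
  rw [integral_exp_neg_mul_Ioi hz, mul_one_div] at this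
  rw [← this]
  refine integral_congr_ae (ae_of_all _ fun x => ?_)
  simp only
  rw [← intervalIntegral.integral_mul_const]
  refine intervalIntegral.integral_congr fun t _ => ?_
  change _ = f t * _ * _
  rw [mul_assoc, ← Complex.exp_add]
  congr 2
  push_cast
  ring

/-- **Newman's analytic theorem**: if the Laplace transform of a bounded function extends to a
function on the closed right half-plane whose slope at `0` is continuous, then the improper
integral converges to the value of the extension at `0`. -/
theorem tendsto_intervalIntegral_of_laplace {f : ℝ → ℂ} (hf : Measurable f) {M : ℝ≥0}
    (hM : ∀ t, ‖f t‖ ≤ M) {G : ℂ → ℂ} (hG : ContinuousOn (dslope G 0) {z | 0 ≤ z.re})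
    (hlap : ∀ z : ℂ, 0 < z.re → ∫ t in Ioi (0 : ℝ), f t * Complex.exp (-(z * t)) = G z) :
    Tendsto (fun T => ∫ t in (0 : ℝ)..T, f t) atTop (𝓝 (G 0)) := by
  have hL := lipschitzWith_intervalIntegral hf hM
  have hW : LipschitzWith M (fun T => (∫ t in (0 : ℝ)..T, f t) - G 0) := by
    simpa using hL.sub (LipschitzWith.const (G 0))
  rw [← tendsto_sub_nhds_zero_iff]
  refine tendsto_zero_of_lipschitzWith_of_laplace hW hG fun z hz => ?_
  have hz0 : z ≠ 0 := by rintro rfl; simp at hz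
  simp_rw [sub_mul]
  rw [integral_sub (integrableOn_mul_exp_of_lipschitzWith hL hz)
    (integrableOn_mul_exp_of_lipschitzWith (LipschitzWith.const (G 0)) hz),
    laplace_intervalIntegral hf hM hz, hlap z hz, integral_const_mul, integral_exp_neg_mul_Ioi hz,
    dslope_of_ne _ hz0, slope_def_field]
  rw [sub_zero]
  ring

/-- Monotonicity of `eᵗ (f t + 1)` and convergence of `∫ f` force `f → 0`. -/
lemma tendsto_zero_of_tendsto_intervalIntegral {f : ℝ → ℝ} (hf : Measurable f) {M : ℝ}
    (hM : ∀ t, ‖f t‖ ≤ M) (hmono : MonotoneOn (fun t => rexp t * (f t + 1)) (Ici 0))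
    (hpos : ∀ t, 0 ≤ f t + 1) {L : ℝ}
    (hL : Tendsto (fun T => ∫ t in (0 : ℝ)..T, f t) atTop (𝓝 L)) :
    Tendsto f atTop (𝓝 0) := by
  have hii : ∀ a b : ℝ, IntervalIntegrable f volume a b := fun a b =>
    (intervalIntegrable_const (c := M)).mono_fun hf.aestronglyMeasurable
      (ae_of_all _ fun t => by
        simpa using (hM t).trans (le_abs_self M))
  have hbig : ∀ s t, 0 ≤ s → s ≤ t → (f s + 1) * (1 - (t - s)) ≤ f t + 1 := by
    intro s t hs hst
    have h := hmono (mem_Ici.mpr hs) (mem_Ici.mpr (hs.trans hst)) hst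
    simp only at h
    have h2 : (f s + 1) * rexp (-(t - s)) ≤ f t + 1 := by
      have e : rexp (-(t - s)) = rexp s * rexp (-t) := by rw [← Real.exp_add]; ring_nf
      rw [e]
      calc (f s + 1) * (rexp s * rexp (-t)) = rexp s * (f s + 1) * rexp (-t) := by ring
        _ ≤ rexp t * (f t + 1) * rexp (-t) := by gcongr
        _ = f t + 1 := by rw [mul_right_comm, ← Real.exp_add]; simp
    refine le_trans (mul_le_mul_of_nonneg_left ?_ (hpos s)) h2
    linarith [Real.add_one_le_exp (-(t - s))]
  have hinc : ∀ h : ℝ, Tendsto (fun T => ∫ t in T..(T + h), f t) atTop (𝓝 0) := by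
    intro h
    have h2 := (hL.comp (tendsto_atTop_add_const_right atTop h tendsto_id)).sub hL
    rw [sub_self] at h2
    refine h2.congr fun T => ?_
    simp only [Function.comp, id]
    rw [intervalIntegral.integral_interval_sub_left (hii _ _) (hii _ _)]
  have hM1 : ∀ t, f t + 1 ≤ M + 1 := fun t => by
    have := hM t
    rw [Real.norm_eq_abs] at this
    linarith [le_abs_self (f t)]
  have hM0 : 0 ≤ M := (norm_nonneg _).trans (hM 0)
  have upper : ∀ h : ℝ, 0 < h → ∀ t, 0 ≤ t →
      f t ≤ (M + 1) * h + h⁻¹ * ∫ u in t..(t + h), f u := by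
    intro h hh t ht
    have h1 : ∫ _u in t..(t + h), (f t - (M + 1) * h) ≤ ∫ u in t..(t + h), f u := by
      refine intervalIntegral.integral_mono_on (by linarith) intervalIntegrable_const (hii _ _)
        fun u hu => ?_
      have := hbig t u ht hu.1
      nlinarith [hu.1, hu.2, hM1 t, hpos t]
    rw [intervalIntegral.integral_const, smul_eq_mul, add_sub_cancel_left] at h1
    have h2 := mul_le_mul_of_nonneg_left h1 (inv_pos.mpr hh).le
    rw [inv_mul_cancel_left₀ hh.ne'] at h2
    linarith
  have lower : ∀ h : ℝ, 0 < h → ∀ t, 0 ≤ t →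
      h⁻¹ * (∫ u in t..(t + h), f u) - (M + 1) * h ≤ f (t + h) := by
    intro h hh t ht
    have h1 : ∫ u in t..(t + h), f u ≤ ∫ _u in t..(t + h), (f (t + h) + (M + 1) * h) := by
      refine intervalIntegral.integral_mono_on (by linarith) (hii _ _) intervalIntegrable_const
        fun u hu => ?_
      have := hbig u (t + h) (ht.trans hu.1) hu.2
      nlinarith [hu.1, hu.2, hM1 u, hpos u]
    rw [intervalIntegral.integral_const, smul_eq_mul, add_sub_cancel_left] at h1
    have h2 := mul_le_mul_of_nonneg_left h1 (inv_pos.mpr hh).le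
    rw [inv_mul_cancel_left₀ hh.ne'] at h2
    linarith
  rw [Metric.tendsto_atTop']
  intro δ hδ
  set h : ℝ := δ / (2 * (M + 1)) with hh
  have hhpos : 0 < h := by positivity
  have hMh : (M + 1) * h = δ / 2 := by rw [hh]; field_simp
  have hlim := (hinc h).const_mul h⁻¹
  rw [mul_zero] at hlim
  rw [Metric.tendsto_atTop'] at hlim
  obtain ⟨N, hN⟩ := hlim (δ / 2) (half_pos hδ)
  refine ⟨max N 0 + h, fun t ht => ?_⟩
  have ht1 : N < t - h := by linarith [le_max_left N 0]
  have ht2 : 0 ≤ t - h := by linarith [le_max_right N 0]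
  have a1 := hN t (by linarith)
  have a2 := hN (t - h) ht1
  rw [dist_zero_right, Real.norm_eq_abs, abs_lt] at a1 a2 ⊢
  have b1 := upper h hhpos t (by linarith)
  have b2 := lower h hhpos (t - h) ht2
  rw [sub_add_cancel] at a2 b2
  constructor <;> linarith [a1.1, a1.2, a2.1, a2.2]

lemma setIntegral_exp_image {F : Type*} [NormedAddCommGroup F] [NormedSpace ℝ F] {s : Set ℝ}
    (hs : MeasurableSet s) (g : ℝ → F) :
    ∫ x in rexp '' s, g x = ∫ t in s, rexp t • g (rexp t) := by
  rw [integral_image_eq_integral_abs_deriv_smul hs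
    (fun x _ => (Real.hasDerivAt_exp x).hasDerivWithinAt) Real.exp_injective.injOn]
  simp [abs_of_pos, Real.exp_pos]

lemma exp_image_Ioi_zero : rexp '' Ioi 0 = Ioi 1 := by
  ext x
  constructor
  · rintro ⟨t, ht, rfl⟩
    exact Real.one_lt_exp_iff.mpr ht
  · intro hx
    have hx : 1 < x := hx
    exact ⟨log x, Real.log_pos hx, Real.exp_log (by linarith)⟩

lemma exp_image_Ioc_zero (T : ℝ) : rexp '' Ioc 0 T = Ioc 1 (rexp T) := by
  ext x
  constructor
  · rintro ⟨t, ht, rfl⟩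
    exact ⟨Real.one_lt_exp_iff.mpr ht.1, Real.exp_le_exp.mpr ht.2⟩
  · rintro ⟨hx, hx'⟩
    exact ⟨log x, ⟨Real.log_pos hx, (Real.log_le_iff_le_exp (by linarith)).mpr hx'⟩,
      Real.exp_log (by linarith)⟩

/-- The normalized error term in a prime-number-theorem-like estimate. -/
noncomputable def normalizedError (a : ℕ → ℝ) (t : ℝ) : ℝ :=
  rexp (-t) * (∑ k ∈ Finset.Icc 1 ⌊rexp t⌋₊, a k) - 1

section

variable {a : ℕ → ℝ}

lemma measurable_normalizedError : Measurable (normalizedError a) := by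
  have h : Measurable fun n : ℕ => ∑ k ∈ Finset.Icc 1 n, a k := measurable_from_nat
  exact ((by fun_prop : Measurable fun t : ℝ => rexp (-t)).mul
    (h.comp (Nat.measurable_floor.comp Real.measurable_exp))).sub_const 1

lemma normalizedError_add_one_nonneg (ha : ∀ n, 0 ≤ a n) (t : ℝ) :
    0 ≤ normalizedError a t + 1 := by
  rw [normalizedError, sub_add_cancel]
  exact mul_nonneg (Real.exp_pos _).le (Finset.sum_nonneg fun k _ => ha k)

lemma normalizedError_add_one_le {C : ℝ} (hC0 : 0 ≤ C)
    (hC : ∀ n : ℕ, ∑ k ∈ Finset.Icc 1 n, a k ≤ C * n) (t : ℝ) : normalizedError a t + 1 ≤ C := by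
  rw [normalizedError, sub_add_cancel]
  calc rexp (-t) * (∑ k ∈ Finset.Icc 1 ⌊rexp t⌋₊, a k)
      ≤ rexp (-t) * (C * rexp t) := by
        gcongr
        exact (hC _).trans (mul_le_mul_of_nonneg_left (Nat.floor_le (Real.exp_pos t).le) hC0)
    _ = C := by rw [mul_left_comm, ← Real.exp_add]; simp

lemma norm_normalizedError_le (ha : ∀ n, 0 ≤ a n) {C : ℝ} (hC0 : 0 ≤ C)
    (hC : ∀ n : ℕ, ∑ k ∈ Finset.Icc 1 n, a k ≤ C * n) (t : ℝ) :
    ‖normalizedError a t‖ ≤ C + 1 := by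
  rw [Real.norm_eq_abs, abs_le]
  have h1 := normalizedError_add_one_nonneg ha t
  have h2 := normalizedError_add_one_le hC0 hC t
  constructor <;> linarith

lemma monotone_exp_mul_normalizedError (ha : ∀ n, 0 ≤ a n) :
    Monotone (fun t => rexp t * (normalizedError a t + 1)) := by
  intro s t hst
  simp only [normalizedError, sub_add_cancel, ← mul_assoc, ← Real.exp_add, add_neg_cancel,
    Real.exp_zero, one_mul]
  exact Finset.sum_le_sum_of_subset_of_nonneg
    (Finset.Icc_subset_Icc_right (Nat.floor_le_floor (Real.exp_le_exp.mpr hst)))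
    fun k _ _ => ha k

lemma laplace_normalizedError (ha : ∀ n, 0 ≤ a n) {C : ℝ} (hC0 : 0 ≤ C)
    (hC : ∀ n : ℕ, ∑ k ∈ Finset.Icc 1 n, a k ≤ C * n) {z : ℂ} (hz : 0 < z.re) :
    ∫ t in Ioi (0 : ℝ), (normalizedError a t : ℂ) * Complex.exp (-(z * t)) =
      LSeries (fun n => a n) (1 + z) / (1 + z) - 1 / z := by
  have h1 : IntegrableOn (fun t : ℝ => Complex.exp (-(z * t))) (Ioi 0) := by
    simpa using integrableOn_mul_exp_of_lipschitzWith (LipschitzWith.const (1 : ℂ)) hz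
  have h2 : IntegrableOn (fun t : ℝ => (normalizedError a t : ℂ) * Complex.exp (-(z * t)))
      (Ioi 0) :=
    Integrable.bdd_mul h1 (Complex.measurable_ofReal.comp
      measurable_normalizedError).aestronglyMeasurable
      (ae_of_all _ fun t => by
        simpa using norm_normalizedError_le ha hC0 hC t)
  have hO : (fun n : ℕ => ∑ k ∈ Finset.Icc 1 n, a k) =O[atTop] fun n => (n : ℝ) ^ (1 : ℝ) := by
    refine Asymptotics.IsBigO.of_bound C (Eventually.of_forall fun n => ?_)
    rw [Real.rpow_one, Real.norm_eq_abs, abs_of_nonneg (Finset.sum_nonneg fun k _ => ha k)]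
    simpa using hC n
  have hz1 : 1 + z ≠ 0 := by
    intro h
    have := congrArg Complex.re h
    simp at this
    linarith
  rw [LSeries_eq_mul_integral_of_nonneg a zero_le_one (s := 1 + z) (by simpa using hz) hO ha,
    mul_div_cancel_left₀ _ hz1, ← exp_image_Ioi_zero, setIntegral_exp_image measurableSet_Ioi,
    ← integral_exp_neg_mul_Ioi hz, eq_sub_iff_add_eq, ← integral_add h2 h1]
  refine integral_congr_ae (ae_of_all _ fun t => ?_)
  simp only [normalizedError, Complex.real_smul]
  rw [Complex.cpow_def_of_ne_zero (by exact_mod_cast (Real.exp_pos t).ne'),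
    ← Complex.ofReal_log (Real.exp_pos t).le, Real.log_exp]
  push_cast
  rw [show ((t : ℂ) * -(1 + z + 1)) = -t + -t + -(z * t) by ring, Complex.exp_add, Complex.exp_add]
  have : Complex.exp t * Complex.exp (-t) = 1 := by rw [← Complex.exp_add]; simp
  linear_combination (-Complex.exp (-t) * Complex.exp (-(z * t)) *
    ∑ k ∈ Finset.Icc 1 ⌊rexp t⌋₊, (a k : ℂ)) * this

lemma sum_div_eq_normalizedError (ha0 : a 0 = 0) {T : ℝ} (hT : 0 ≤ T)
    (hint : IntervalIntegrable (normalizedError a) volume 0 T) :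
    ∑ n ∈ Finset.Icc 1 ⌊rexp T⌋₊, a n / n - T =
      normalizedError a T + 1 + ∫ t in (0 : ℝ)..T, normalizedError a t := by
  have hsum : ∀ (g : ℕ → ℝ) (N : ℕ), g 0 = 0 →
      ∑ k ∈ Finset.Icc 0 N, g k = ∑ k ∈ Finset.Icc 1 N, g k := by
    intro g N hg
    rw [← Finset.add_sum_Ioc_eq_sum_Icc (Nat.zero_le N), hg, zero_add]
    rfl
  have habel := sum_mul_eq_sub_integral_mul₀ (f := fun x : ℝ => x⁻¹) (c := a) ha0 (rexp T)
    (fun t ht => (hasDerivAt_inv (by linarith [ht.1] : t ≠ 0)).differentiableAt) (by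
      refine ContinuousOn.integrableOn_compact isCompact_Icc ?_
      simp only [deriv_inv']
      refine ContinuousOn.neg (ContinuousOn.inv₀ (by fun_prop) fun t ht => ?_)
      have : 0 < t := by linarith [ht.1]
      positivity)
  rw [hsum _ _ (by simp [ha0]), hsum _ _ ha0, ← exp_image_Ioc_zero,
    setIntegral_exp_image measurableSet_Ioc, ← intervalIntegral.integral_of_le hT] at habel
  have e1 : ∑ n ∈ Finset.Icc 1 ⌊rexp T⌋₊, a n / n =
      ∑ n ∈ Finset.Icc 1 ⌊rexp T⌋₊, (n : ℝ)⁻¹ * a n :=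
    Finset.sum_congr rfl fun n _ => by rw [div_eq_inv_mul]
  have e2 : ∫ t in (0 : ℝ)..T, rexp t • (deriv (fun x : ℝ => x⁻¹) (rexp t) *
      ∑ k ∈ Finset.Icc 0 ⌊rexp t⌋₊, a k) = -∫ t in (0 : ℝ)..T, (normalizedError a t + 1) := by
    rw [← intervalIntegral.integral_neg]
    refine intervalIntegral.integral_congr fun t _ => ?_
    simp only [normalizedError, sub_add_cancel, smul_eq_mul, deriv_inv', hsum _ _ ha0, Real.exp_neg]
    field_simp
  rw [e1, habel, e2, intervalIntegral.integral_add hint intervalIntegrable_const,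
    intervalIntegral.integral_const]
  simp only [normalizedError, Real.exp_neg, smul_eq_mul]
  ring

/-- A Tauberian theorem: if the Dirichlet series of a nonnegative sequence with linearly bounded
partial sums extends, apart from a simple pole at `1` with residue `1`, holomorphically to a
neighbourhood of `{s | 1 ≤ s.re}`, then `∑ n ≤ x, a n / n - log x` tends to the constant term at
the pole. -/
theorem tendsto_sum_div_sub_log (ha : ∀ n, 0 ≤ a n) (ha0 : a 0 = 0) {C : ℝ}
    (hC : ∀ n : ℕ, ∑ k ∈ Finset.Icc 1 n, a k ≤ C * n) {G : ℂ → ℂ} {U : Set ℂ} (hU : IsOpen U)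
    (hUre : {s : ℂ | 1 ≤ s.re} ⊆ U) (hG : DifferentiableOn ℂ G U)
    (hL : ∀ s : ℂ, 1 < s.re → LSeries (fun n => a n) s = G s + 1 / (s - 1)) :
    Tendsto (fun x : ℝ => ∑ n ∈ Finset.Icc 1 ⌊x⌋₊, a n / n - log x) atTop (𝓝 (G 1).re) := by
  have hC0 : 0 ≤ C := by
    have := (Finset.sum_nonneg fun k (_ : k ∈ Finset.Icc 1 1) => ha k).trans (hC 1)
    simpa using this
  have hM := norm_normalizedError_le ha hC0 hC
  set V : Set ℂ := (fun z => 1 + z) ⁻¹' U ∩ {z | 1 + z ≠ 0} with hV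
  have hVo : IsOpen V := (hU.preimage (by fun_prop)).inter
    (isOpen_ne_fun (by fun_prop) (by fun_prop))
  have hVre : {z : ℂ | 0 ≤ z.re} ⊆ V := by
    intro z (hz : 0 ≤ z.re)
    refine ⟨hUre (by simpa using hz), fun h => ?_⟩
    have := congrArg Complex.re h
    simp at this
    linarith
  have hdiff : DifferentiableOn ℂ (fun z => (G (1 + z) - 1) / (1 + z)) V := by
    refine DifferentiableOn.div ((hG.comp (by fun_prop) fun z hz => hz.1).sub_const 1)
      (by fun_prop) fun z hz => hz.2
  have h0V : (0 : ℂ) ∈ V := hVre (by simp)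
  have hds := ((continuousOn_dslope (hVo.mem_nhds h0V)).mpr
    ⟨hdiff.continuousOn, hdiff.differentiableAt (hVo.mem_nhds h0V)⟩).mono hVre
  have hNewman := tendsto_intervalIntegral_of_laplace (f := fun t => (normalizedError a t : ℂ))
    (M := ⟨C + 1, by positivity⟩) (Complex.measurable_ofReal.comp measurable_normalizedError)
    (fun t => (Complex.norm_real _).trans_le (hM t)) hds (fun z hz => by
      rw [laplace_normalizedError ha hC0 hC hz, hL _ (by simpa using hz)]
      have hz0 : z ≠ 0 := by rintro rfl; simp at hz
      have hz1 : 1 + z ≠ 0 := (hVre (show 0 ≤ z.re from hz.le)).2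
      rw [add_sub_cancel_left]
      field_simp
      ring)
  have hre := (Complex.continuous_re.tendsto _).comp hNewman
  have hlim : Tendsto (fun T => ∫ t in (0 : ℝ)..T, normalizedError a t) atTop
      (𝓝 ((G 1).re - 1)) := by
    convert hre using 2 with T
    · simp only [Function.comp_apply, intervalIntegral.integral_ofReal, Complex.ofReal_re]
    · simp
  have hzero := tendsto_zero_of_tendsto_intervalIntegral measurable_normalizedError hM
    ((monotone_exp_mul_normalizedError ha).monotoneOn _) (normalizedError_add_one_nonneg ha) hlim
  have hfin := ((hzero.add_const 1).add hlim).comp Real.tendsto_log_atTop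
  rw [show (0 : ℝ) + 1 + ((G 1).re - 1) = (G 1).re by ring] at hfin
  refine hfin.congr' ?_
  filter_upwards [eventually_ge_atTop 1] with x hx
  have hint : IntervalIntegrable (normalizedError a) volume 0 (log x) :=
    (intervalIntegrable_const (c := C + 1)).mono_fun
      measurable_normalizedError.aestronglyMeasurable
      (ae_of_all _ fun t => (hM t).trans (le_abs_self _))
  have := sum_div_eq_normalizedError ha0 (Real.log_nonneg hx) hint
  rw [Real.exp_log (by linarith)] at this
  rw [this]
  rfl

end

end Tauberian

section ArithmeticProgression

open DirichletCharacter ArithmeticFunction ArithmeticFunction.vonMangoldt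

lemma differentiable_deriv_of_differentiable {f : ℂ → ℂ} (hf : Differentiable ℂ f) :
    Differentiable ℂ (deriv f) :=
  differentiableOn_univ.1 (hf.differentiableOn.deriv isOpen_univ)

theorem tendsto_sum_residueClass_div_sub_log {q : ℕ} [NeZero q] {a : ZMod q} (ha : IsUnit a) :
    Tendsto (fun x : ℝ => q.totient * ∑ n ∈ Finset.Icc 1 ⌊x⌋₊, residueClass a n / n - Real.log x)
      atTop (𝓝 (q.totient * LFunctionResidueClassAux a 1).re) := by
  have hφ : (q.totient : ℂ) ≠ 0 := mod_cast (Nat.totient_pos.2 (NeZero.pos q)).ne'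
  let U : Set ℂ := {s | LFunctionTrivChar₁ q s ≠ 0} ∩
    ⋂ χ : {χ : DirichletCharacter ℂ q // χ ≠ 1}, {s | LFunction χ.1 s ≠ 0}
  have hU : IsOpen U :=
    (isOpen_ne_fun (differentiable_LFunctionTrivChar₁ q).continuous continuous_const).inter
      (isOpen_iInter_of_finite fun χ =>
        isOpen_ne_fun (differentiable_LFunction χ.2).continuous continuous_const)
  have hUre : {s : ℂ | 1 ≤ s.re} ⊆ U := by
    intro s hs
    refine ⟨?_, Set.mem_iInter.2 fun χ => LFunction_ne_zero_of_one_le_re χ.1 (.inl χ.2) hs⟩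
    rcases eq_or_ne s 1 with rfl | h1
    · exact LFunctionTrivChar₁_apply_one_ne_zero q
    · simp only [Set.mem_ofPred_eq, Function.update_of_ne h1]
      exact mul_ne_zero (sub_ne_zero.2 h1) (LFunction_ne_zero_of_one_le_re 1 (.inr h1) hs)
  have hG : DifferentiableOn ℂ (fun s => q.totient * LFunctionResidueClassAux a s) U := by
    refine (((DifferentiableOn.sub ?_ (DifferentiableOn.fun_sum fun χ hχ => ?_)).const_mul
      _).const_mul _)
    · exact (differentiable_deriv_of_differentiable
        (differentiable_LFunctionTrivChar₁ q)).neg.differentiableOn.div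
        (differentiable_LFunctionTrivChar₁ q).differentiableOn fun s hs => hs.1
    · have hχ' : χ ≠ 1 := by simpa using hχ
      exact ((differentiable_deriv_of_differentiable
        (differentiable_LFunction hχ')).const_mul _).differentiableOn.div
        (differentiable_LFunction hχ').differentiableOn
        fun s hs => Set.mem_iInter.1 hs.2 ⟨χ, hχ'⟩
  have hnn : ∀ n, 0 ≤ q.totient * residueClass a n := fun n =>
    mul_nonneg (Nat.cast_nonneg _) (residueClass_nonneg a n)
  have key := tendsto_sum_div_sub_log (a := fun n => q.totient * residueClass a n)
    (C := q.totient * (Real.log 4 + 4)) hnn (by simp) (fun n => ?_) hU hUre hG (fun s hs => ?_)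
  · simpa only [mul_div_assoc, ← Finset.mul_sum] using key
  · rw [← Finset.mul_sum, mul_assoc]
    refine mul_le_mul_of_nonneg_left ?_ (Nat.cast_nonneg _)
    calc ∑ k ∈ Finset.Icc 1 n, residueClass a k ≤ ∑ k ∈ Finset.Icc 1 n, vonMangoldt k :=
          Finset.sum_le_sum fun k _ => residueClass_le a k
      _ = Chebyshev.psi n := by simp [Chebyshev.psi, ← Finset.Icc_add_one_left_eq_Ioc]
      _ ≤ _ := Chebyshev.psi_le_const_mul_self (Nat.cast_nonneg n)
  · have h := eqOn_LFunctionResidueClassAux ha hs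
    simp only at h
    rw [h]
    have : (fun n : ℕ => ((q.totient * residueClass a n : ℝ) : ℂ)) =
        (q.totient : ℂ) • fun n : ℕ => (residueClass a n : ℂ) := by
      ext n; simp
    rw [this, LSeries_smul]
    field_simp
    ring

lemma hasDerivAt_sub_one_mul_riemannZeta :
    HasDerivAt (Function.update (fun s => (s - 1) * riemannZeta s) 1 1)
      (Real.eulerMascheroniConstant : ℂ) 1 := by
  rw [hasDerivAt_iff_tendsto_slope]
  refine tendsto_riemannZeta_sub_one_div.congr' ?_
  filter_upwards [self_mem_nhdsWithin] with s hs
  have hs' : s - 1 ≠ 0 := sub_ne_zero.2 hs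
  rw [slope_def_field, Function.update_self, Function.update_of_ne hs]
  field_simp

lemma logDeriv_LFunctionTrivChar₁_one {q : ℕ} (hq : q.Prime) [NeZero q] :
    deriv (LFunctionTrivChar₁ q) 1 / LFunctionTrivChar₁ q 1 =
      (Real.eulerMascheroniConstant + Real.log q / (q - 1) : ℝ) := by
  have hq0 : (q : ℂ) ≠ 0 := mod_cast hq.ne_zero
  have hq1 : (q : ℂ) - 1 ≠ 0 := sub_ne_zero.2 (mod_cast hq.one_lt.ne')
  have hE : LFunctionTrivChar₁ q = fun s => (1 - (q : ℂ) ^ (-s)) *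
      Function.update (fun s => (s - 1) * riemannZeta s) 1 1 s := by
    ext s
    rcases eq_or_ne s 1 with rfl | hs
    · simp [hq.primeFactors, Complex.cpow_neg_one]
    · simp only [Function.update_of_ne hs, LFunctionTrivChar_eq_mul_riemannZeta hs,
        hq.primeFactors, Finset.prod_singleton]
      ring
  have hpow : HasDerivAt (fun s : ℂ => 1 - (q : ℂ) ^ (-s))
      ((q : ℂ)⁻¹ * Complex.log q) 1 := by
    refine (((hasDerivAt_neg (1 : ℂ)).const_cpow (.inl hq0)).const_sub 1).congr_deriv ?_
    rw [Complex.cpow_neg_one]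
    ring
  rw [hE, (hpow.fun_mul hasDerivAt_sub_one_mul_riemannZeta).deriv]
  simp only [Function.update_self, Complex.cpow_neg_one, mul_one]
  push_cast [Complex.natCast_log]
  field_simp
  ring

/-- The units of `ZMod q` whose `m`-th power is `1`. -/
abbrev powKer (q m : ℕ) : Subgroup (ZMod q)ˣ := (powMonoidHom m).ker

open scoped Classical in
lemma sum_powKer_apply_inv {q : ℕ} [NeZero q] {m : ℕ} (hm : m ≠ 0)
    [Fintype (powKer q m)] (χ : DirichletCharacter ℂ q) :
    ∑ u : powKer q m, χ ((u : (ZMod q)ˣ) : ZMod q)⁻¹ =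
      if ∀ a : ZMod q, a ^ m = 1 → χ a = 1 then
        (Nat.card (powKer q m) : ℂ) else 0 := by
  have h1 := sum_hom_units
    (((χ : ZMod q →* ℂ).comp (Units.coeHom (ZMod q))).comp (powKer q m).subtype)
  have h2 : ∑ u : powKer q m, χ ((u : (ZMod q)ˣ) : ZMod q)⁻¹ =
      ∑ u : powKer q m, χ ((u : (ZMod q)ˣ) : ZMod q) := by
    refine Fintype.sum_equiv (Equiv.inv (powKer q m)) _ _ fun u => ?_
    simp [ZMod.inv_coe_unit]
  rw [h2]
  refine Eq.trans h1 ?_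
  rw [Nat.card_eq_fintype_card]
  push_cast
  congr 1
  rw [eq_iff_iff]
  constructor
  · intro h a ha
    obtain ⟨u, rfl⟩ := IsUnit.of_pow_eq_one ha hm
    have hu : u ∈ powKer q m := by
      rw [MonoidHom.mem_ker, powMonoidHom_apply]
      exact Units.ext (by simpa using ha)
    exact DFunLike.congr_fun h ⟨u, hu⟩
  · intro h
    ext ⟨u, hu⟩
    refine h u ?_
    rw [MonoidHom.mem_ker, powMonoidHom_apply] at hu
    rw [← Units.val_pow_eq_pow_val, hu, Units.val_one]

lemma sum_powKer_residueClass {q : ℕ} [NeZero q] {m : ℕ} (hm : m ≠ 0)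
    [Fintype (powKer q m)] (n : ℕ) :
    ∑ u : powKer q m,
      residueClass ((u : (ZMod q)ˣ) : ZMod q) n =
      if (n : ZMod q) ^ m = 1 then vonMangoldt n else 0 := by
  split_ifs with h
  · obtain ⟨v, hv⟩ := IsUnit.of_pow_eq_one h hm
    have hvK : v ∈ powKer q m := by
      rw [MonoidHom.mem_ker, powMonoidHom_apply]
      exact Units.ext (by simpa [hv] using h)
    rw [Finset.sum_eq_single ⟨v, hvK⟩]
    · exact Set.indicator_of_mem (by simp [hv]) _
    · intro u _ hu
      refine Set.indicator_of_notMem (fun hn => hu ?_) _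
      exact Subtype.ext (Units.ext (hn.symm.trans hv.symm))
    · simp
  · refine Finset.sum_eq_zero fun u _ => Set.indicator_of_notMem (fun hn => h ?_) _
    have hu := u.2
    rw [MonoidHom.mem_ker, powMonoidHom_apply] at hu
    rw [show (n : ZMod q) = _ from hn, ← Units.val_pow_eq_pow_val, hu, Units.val_one]

open scoped Classical in
lemma sum_powKer_LFunctionResidueClassAux_one {q : ℕ} (hq : q.Prime) [NeZero q] {m : ℕ}
    (hm : m ≠ 0) [Fintype (powKer q m)] :
    ∑ u : powKer q m,
      (q.totient * LFunctionResidueClassAux ((u : (ZMod q)ˣ) : ZMod q) 1) =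
      -(Nat.card (powKer q m) *
        ((Real.eulerMascheroniConstant + Real.log q / (q - 1) : ℝ) +
        ∑ χ : DirichletCharacter ℂ q with χ ≠ 1 ∧ ∀ a : ZMod q, a ^ m = 1 → χ a = 1,
          deriv (LFunction χ) 1 / LFunction χ 1)) := by
  have hφ : (q.totient : ℂ) ≠ 0 := mod_cast (Nat.totient_pos.2 hq.pos).ne'
  simp only [LFunctionResidueClassAux, mul_inv_cancel_left₀ hφ, neg_div,
    logDeriv_LFunctionTrivChar₁_one hq]
  rw [Finset.sum_sub_distrib, Finset.sum_comm]
  simp only [mul_div_assoc, ← Finset.sum_mul, sum_powKer_apply_inv hm, ite_mul, zero_mul]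
  rw [← Finset.sum_filter, ← Finset.mul_sum, ← Finset.filter_filter, 
    show Finset.univ.filter (fun χ : DirichletCharacter ℂ q => χ ≠ 1) = {1}ᶜ by ext; simp]
  simp only [Finset.sum_const, Finset.card_univ, nsmul_eq_mul, Nat.card_eq_fintype_card]
  rw [mul_neg, sub_eq_add_neg, ← neg_add, ← mul_add]
  congr!

end ArithmeticProgression

/-- Let `q` be an odd prime and `m ∣ q−1`. Then
`lim_{x→∞} (log x − ((q−1)/m)·∑_{n ≤ x, n^m ≡ 1 (mod q)} Λ(n)/n)`
exists and equals `γ_{K_m} + log q/(q−1)`. -/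
theorem statement6 (q m : ℕ) (hq : q.Prime) (hq_odd : q ≠ 2) (hm : m ∣ q - 1) :
    Tendsto (fun x : ℝ => Real.log x -
        (((q : ℝ) - 1) / m) *
          ∑ n ∈ (Finset.Icc 1 ⌊x⌋₊).filter (fun n : ℕ => ((n : ZMod q)) ^ m = 1),
            ArithmeticFunction.vonMangoldt n / n)
      atTop (𝓝 (gammaK q m + Real.log q / ((q : ℝ) - 1))) := by
  classical
  have : Fact q.Prime := ⟨hq⟩
  have hm0 : m ≠ 0 := by
    rintro rfl
    have := hq.two_le
    have := Nat.zero_dvd.1 hm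
    omega
  have hmR : (m : ℝ) ≠ 0 := mod_cast hm0
  have hcard : Nat.card (powKer q m) = m := by
    rw [IsCyclic.card_powMonoidHom_ker, Nat.card_eq_fintype_card, ZMod.card_units]
    exact Nat.gcd_eq_right hm
  have hφ : (q.totient : ℝ) = q - 1 := by
    rw [Nat.totient_prime hq, Nat.cast_pred hq.pos]
  have hγ : gammaK q m + Real.log q / ((q : ℝ) - 1) =
      -(∑ u : powKer q m, (q.totient * ArithmeticFunction.vonMangoldt.LFunctionResidueClassAux
        ((u : (ZMod q)ˣ) : ZMod q) 1).re) / m := by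
    have hLfun : ∀ χ : DirichletCharacter ℂ q, Lfun χ = DirichletCharacter.LFunction χ := by
      intro χ
      ext s
      simp [Lfun, hq.ne_zero]
    rw [← Complex.re_sum, sum_powKer_LFunctionResidueClassAux_one hq hm0, hcard,
      gammaK, finsum_mem_eq_finite_toFinset_sum _ (Set.toFinite _)]
    simp only [hLfun]
    rw [← Complex.ofReal_natCast, Complex.neg_re, Complex.re_ofReal_mul, neg_neg,
      mul_div_cancel_left₀ _ hmR, Complex.add_re, Complex.ofReal_re, Set.Finite.toFinset_ofPred]
    ring
  rw [hγ]
  refine ((tendsto_finsetSum Finset.univ fun (u : powKer q m) _ =>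
    tendsto_sum_residueClass_div_sub_log u.1.isUnit).neg.div_const (m : ℝ)).congr fun x => ?_
  rw [Finset.sum_sub_distrib, ← Finset.mul_sum, Finset.sum_comm, Finset.sum_filter]
  simp only [← Finset.sum_div, sum_powKer_residueClass hm0, hφ]
  simp only [Finset.sum_const, Finset.card_univ, ← Nat.card_eq_fintype_card, hcard,
    nsmul_eq_mul, ite_div, zero_div]
  field_simp
  ring
end

section
/- For every real x ≥ 3, ∑_{p prime, p > x} (log p)/(p²−1) < 1.053/x. -/
open Filter Topology

namespace PrimeTail

open ArithmeticFunction (vonMangoldt)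

/-- The tail `∑_{n > q} (log n) / n²`. -/
noncomputable def logTail (q : ℕ) : ℝ := ∑' n : ℕ, if q < n then Real.log n / (n : ℝ) ^ 2 else 0

/-- The tail `∑_{n > q} 1 / n²`. -/
noncomputable def sqTail (q : ℕ) : ℝ := ∑' n : ℕ, if q < n then 1 / (n : ℝ) ^ 2 else 0

/-- The tail `∑_{n > q} Λ(n) / n²`. -/
noncomputable def vonMangoldtTail (q : ℕ) : ℝ :=
  ∑' n : ℕ, if q < n then vonMangoldt n / (n : ℝ) ^ 2 else 0

theorem summable_ite_lt {f : ℕ → ℝ} (hf : Summable f) (q : ℕ) :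
    Summable fun n => if q < n then f n else 0 := by
  have := hf.indicator {n | q < n}
  refine this.congr fun n => ?_
  simp [Set.indicator_apply]

theorem summable_one_div_sq : Summable fun n : ℕ => 1 / (n : ℝ) ^ 2 :=
  Real.summable_one_div_nat_pow.2 one_lt_two

theorem summable_log_div_sq : Summable fun n : ℕ => Real.log n / (n : ℝ) ^ 2 := by
  have h : Summable fun n : ℕ => 2 * (1 / (n : ℝ) ^ (3 / 2 : ℝ)) :=
    (Real.summable_one_div_nat_rpow.2 (by norm_num)).mul_left 2
  refine h.of_nonneg_of_le (fun n => div_nonneg (Real.log_natCast_nonneg n) (by positivity))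
    fun n => ?_
  rcases Nat.eq_zero_or_pos n with rfl | hn
  · simp
  have hn' : (0 : ℝ) < n := by exact_mod_cast hn
  have h1 : Real.log n ≤ (n : ℝ) ^ (1 / 2 : ℝ) / (1 / 2) :=
    Real.log_le_rpow_div hn'.le (by norm_num)
  have h2 : (n : ℝ) ^ (1 / 2 : ℝ) * (n : ℝ) ^ (3 / 2 : ℝ) = (n : ℝ) ^ 2 := by
    rw [← Real.rpow_add hn', ← Real.rpow_natCast]
    norm_num
  rw [mul_one_div, div_le_div_iff₀ (by positivity) (by positivity), ← h2]
  have h3 : 0 < (n : ℝ) ^ (3 / 2 : ℝ) := by positivity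
  nlinarith

theorem summable_vonMangoldt_div_sq : Summable fun n : ℕ => vonMangoldt n / (n : ℝ) ^ 2 :=
  summable_log_div_sq.of_nonneg_of_le
    (fun _ => div_nonneg ArithmeticFunction.vonMangoldt_nonneg (by positivity))
    fun _ => div_le_div_of_nonneg_right ArithmeticFunction.vonMangoldt_le_log (by positivity)

/-- Expanding `log n = ∑_{d ∣ n} Λ(d)` in a tail of `∑ (log n) / n²`. -/
theorem hasSum_logTail (q : ℕ) :
    HasSum (fun m : ℕ => vonMangoldt m / (m : ℝ) ^ 2 * sqTail (q / m)) (logTail q) := by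
  set F : ℕ × ℕ → ℝ := fun p =>
    if q < p.1 * p.2 then vonMangoldt p.1 / (p.1 : ℝ) ^ 2 * (1 / (p.2 : ℝ) ^ 2) else 0 with hF
  have hS : Summable F := by
    have h := summable_vonMangoldt_div_sq.mul_of_nonneg summable_one_div_sq
      (fun _ => div_nonneg ArithmeticFunction.vonMangoldt_nonneg (by positivity))
      (fun _ => by positivity)
    refine (h.indicator {p | q < p.1 * p.2}).congr fun p => ?_
    simp [Set.indicator_apply, hF]
  have h1 : ∑' p, F p = logTail q := by
    rw [← (hS.hasSum.tsum_fiberwise fun p : ℕ × ℕ => p.1 * p.2).tsum_eq]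
    refine tsum_congr fun n => ?_
    split_ifs with hn
    · have hn0 : n ≠ 0 := by omega
      have hset : (fun p : ℕ × ℕ => p.1 * p.2) ⁻¹' {n} = ↑n.divisorsAntidiagonal := by
        ext p
        simp [hn0]
      rw [hset, Finset.tsum_subtype' n.divisorsAntidiagonal F, ← ArithmeticFunction.vonMangoldt_sum,
        ← Nat.sum_divisorsAntidiagonal (fun d _ => vonMangoldt d), Finset.sum_div]
      refine Finset.sum_congr rfl fun p hp => ?_
      rw [Nat.mem_divisorsAntidiagonal] at hp
      simp only [hF, hp.1, if_pos hn]
      rw [← hp.1]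
      push_cast
      rw [mul_pow, div_mul_div_comm, mul_one]
    · rw [← tsum_zero (α := ℝ) (β := ((fun p : ℕ × ℕ => p.1 * p.2) ⁻¹' {n} : Set (ℕ × ℕ)))]
      refine tsum_congr fun p => ?_
      have hp : p.1.1 * p.1.2 = n := p.2
      simp [hF, hp, hn]
  have h2 := hS.hasSum.prod_fiberwise fun m => (hS.prod_factor m).hasSum
  rw [h1] at h2
  convert h2 using 2 with m
  rcases Nat.eq_zero_or_pos m with rfl | hm
  · simp [hF]
  rw [sqTail, ← tsum_mul_left]
  refine tsum_congr fun j => ?_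
  simp only [hF, Nat.div_lt_iff_lt_mul hm, mul_comm j m]
  split_ifs <;> simp

theorem tsum_ite_lt {f : ℕ → ℝ} (hf : Summable f) (q : ℕ) :
    ∑' n, (if q < n then f n else 0) = ∑' i, f (i + (q + 1)) := by
  rw [← (summable_ite_lt hf q).sum_add_tsum_nat_add (q + 1), Finset.sum_eq_zero, zero_add]
  · exact tsum_congr fun i => if_pos (by omega)
  · intro i hi
    rw [Finset.mem_range] at hi
    exact if_neg (by omega)

theorem tendsto_telescope {G : ℕ → ℝ} (hG : Tendsto G atTop (𝓝 0)) (q : ℕ) :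
    Tendsto (fun k => ∑ i ∈ Finset.range k, (G (i + q) - G (i + 1 + q))) atTop (𝓝 (G q)) := by
  have h : ∀ k, ∑ i ∈ Finset.range k, (G (i + q) - G (i + 1 + q)) = G q - G (k + q) := fun k => by
    rw [Finset.sum_range_sub' fun i => G (i + q), zero_add]
  simp_rw [h]
  simpa using ((tendsto_add_atTop_iff_nat q).2 hG).const_sub (G q)

theorem tail_le {f G : ℕ → ℝ} (hf : Summable f) (hG : Tendsto G atTop (𝓝 0)) {q : ℕ}
    (h : ∀ n, q ≤ n → f (n + 1) ≤ G n - G (n + 1)) :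
    ∑' n, (if q < n then f n else 0) ≤ G q := by
  rw [tsum_ite_lt hf]
  refine le_of_tendsto_of_tendsto' ((summable_nat_add_iff (q + 1)).2 hf).hasSum.tendsto_sum_nat
    (tendsto_telescope hG q) fun k => Finset.sum_le_sum fun i _ => ?_
  rw [add_right_comm]
  exact h _ (Nat.le_add_left q i)

theorem le_tail {f G : ℕ → ℝ} (hf : Summable f) (hG : Tendsto G atTop (𝓝 0)) {q : ℕ}
    (h : ∀ n, q ≤ n → G n - G (n + 1) ≤ f (n + 1)) :
    G q ≤ ∑' n, (if q < n then f n else 0) := by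
  rw [tsum_ite_lt hf]
  refine le_of_tendsto_of_tendsto' (tendsto_telescope hG q)
    ((summable_nat_add_iff (q + 1)).2 hf).hasSum.tendsto_sum_nat
    fun k => Finset.sum_le_sum fun i _ => ?_
  rw [add_right_comm]
  exact h _ (Nat.le_add_left q i)

theorem tendsto_inv_add (c : ℝ) : Tendsto (fun n : ℕ => 1 / ((n : ℝ) + c)) atTop (𝓝 0) := by
  simp_rw [one_div]
  exact tendsto_inv_atTop_zero.comp
    (tendsto_atTop_add_const_right _ _ tendsto_natCast_atTop_atTop)

theorem sqTail_le (q : ℕ) : sqTail q ≤ 1 / (q + 1 / 2) := by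
  refine tail_le (G := fun n => 1 / ((n : ℝ) + 1 / 2)) summable_one_div_sq
    (tendsto_inv_add _) fun n _ => ?_
  have : (0 : ℝ) ≤ n := n.cast_nonneg
  push_cast
  rw [div_sub_div _ _ (by positivity) (by positivity), div_le_div_iff₀ (by positivity)
    (by positivity)]
  nlinarith

theorem le_sqTail (q : ℕ) : 1 / (q + 1) + 1 / (2 * (q + 1) ^ 2) ≤ sqTail q := by
  refine le_tail (G := fun n => 1 / ((n : ℝ) + 1) + 1 / (2 * ((n : ℝ) + 1) ^ 2))
    summable_one_div_sq ?_ fun n _ => ?_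
  · have h := tendsto_inv_add 1
    have h2 := h.add ((h.mul h).const_mul (1 / 2))
    simp only [mul_zero, add_zero] at h2
    refine h2.congr fun n => ?_
    have : (0 : ℝ) ≤ n := n.cast_nonneg
    field_simp
  · have : (0 : ℝ) ≤ n := n.cast_nonneg
    push_cast
    have key : 1 / ((n : ℝ) + 1) ^ 2 - (1 / ((n : ℝ) + 1) + 1 / (2 * ((n : ℝ) + 1) ^ 2)
        - (1 / ((n : ℝ) + 1 + 1) + 1 / (2 * ((n : ℝ) + 1 + 1) ^ 2)))
        = 1 / (2 * ((n : ℝ) + 1) ^ 2 * ((n : ℝ) + 1 + 1) ^ 2) := by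
      field_simp
      ring
    have : 0 ≤ 1 / (2 * ((n : ℝ) + 1) ^ 2 * ((n : ℝ) + 1 + 1) ^ 2) := by positivity
    linarith

theorem sqTail_succ (q : ℕ) : sqTail q = 1 / ((q : ℝ) + 1) ^ 2 + sqTail (q + 1) := by
  rw [sqTail, sqTail, tsum_ite_lt summable_one_div_sq, tsum_ite_lt summable_one_div_sq,
    ((summable_nat_add_iff (q + 1)).2 summable_one_div_sq).tsum_eq_zero_add]
  push_cast
  congr 2
  · simp
  · funext i
    ring_nf

theorem sqTail_zero : sqTail 0 = Real.pi ^ 2 / 6 := by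
  rw [← hasSum_zeta_two.tsum_eq, sqTail]
  refine tsum_congr fun n => ?_
  rcases Nat.eq_zero_or_pos n with rfl | hn
  · simp
  · exact if_pos hn

theorem abs_sq_mul_sqTail_sub_le {z : ℝ} {q : ℕ} (hq : 40 ≤ q) (h1 : (q : ℝ) ≤ z)
    (h2 : z ≤ q + 1) : |z ^ 2 * sqTail q - z| ≤ 0.51 := by
  have hq' : (40 : ℝ) ≤ q := by exact_mod_cast hq
  have hz : 0 ≤ z := by linarith
  rw [abs_le]
  constructor
  · have h3 := mul_le_mul_of_nonneg_left (le_sqTail q) (sq_nonneg z)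
    have h4 : z - 0.51 ≤ z ^ 2 * (1 / (q + 1) + 1 / (2 * (q + 1) ^ 2)) := by
      obtain ⟨a, ha⟩ : ∃ a : ℝ, a = q + 1 := ⟨_, rfl⟩
      obtain ⟨t, ht⟩ : ∃ t : ℝ, z = a - t := ⟨a - z, by ring⟩
      rw [← ha, ht, ← sub_nonneg]
      have ha0 : 0 < a := by linarith
      have : (a - t) ^ 2 * (1 / a + 1 / (2 * a ^ 2)) - (a - t - 0.51) =
          (2 * a ^ 2 * (1.01 - t) + 2 * a * (t ^ 2 - t) + t ^ 2) / (2 * a ^ 2) := by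
        field_simp
        ring
      rw [this]
      have ht0 : 0 ≤ t := by linarith
      have ht1 : t ≤ 1 := by linarith
      refine div_nonneg ?_ (by positivity)
      have e1 : 0 ≤ (1 - t) * (a - t) := mul_nonneg (by linarith) (by linarith)
      nlinarith [mul_nonneg ha0.le e1, sq_nonneg t,
        mul_nonneg (sub_nonneg.2 ht1) (mul_nonneg ha0.le ht0)]
    linarith
  · have h3 := mul_le_mul_of_nonneg_left (sqTail_le q) (sq_nonneg z)
    have h4 : z ^ 2 * (1 / (q + 1 / 2)) ≤ z + 0.51 := by
      rw [mul_one_div, div_le_iff₀ (by linarith)]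
      nlinarith
    linarith

/-- The negative `(log t + 1) / t` of a primitive of `(log t) / t²`. -/
noncomputable def logPrim (t : ℝ) : ℝ := (Real.log t + 1) / t

theorem log_le_log_add {a b : ℝ} (ha : 0 < a) (hb : 0 < b) :
    Real.log b ≤ Real.log a + (b - a) / a := by
  have h := Real.log_le_sub_one_of_pos (div_pos hb ha)
  rw [Real.log_div hb.ne' ha.ne'] at h
  have : b / a - 1 = (b - a) / a := by field_simp
  linarith

theorem tendsto_logPrim : Tendsto (fun n : ℕ => logPrim n) atTop (𝓝 0) := by
  have h := (Real.isLittleO_log_id_atTop.tendsto_div_nhds_zero.comp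
    (tendsto_natCast_atTop_atTop (R := ℝ))).add (tendsto_inv_add 0)
  rw [add_zero] at h
  refine h.congr fun n => ?_
  simp [logPrim, add_div]

theorem one_le_log {z : ℝ} (hz : 3 ≤ z) : 1 ≤ Real.log z := by
  rw [Real.le_log_iff_exp_le (by linarith)]
  linarith [Real.exp_one_lt_d9]

theorem logTail_le {q : ℕ} (hq : 3 ≤ q) : logTail q ≤ logPrim q := by
  refine tail_le summable_log_div_sq tendsto_logPrim fun n hn => ?_
  have ha : (3 : ℝ) ≤ n := by exact_mod_cast hq.trans hn
  have h := log_le_log_add (a := n) (b := n + 1) (by linarith) (by linarith)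
  have hb : 1 + 1 / (n : ℝ) ≤ Real.log (n + 1) := by
    have h4 : Real.log 4 ≤ Real.log (n + 1) := Real.log_le_log (by norm_num) (by linarith)
    have : Real.log 4 = 2 * Real.log 2 := by
      rw [show (4 : ℝ) = 2 ^ 2 by norm_num, Real.log_pow]
      norm_num
    have : 1 / (n : ℝ) ≤ 1 / 3 := one_div_le_one_div_of_le (by norm_num) ha
    linarith [Real.log_two_gt_d9]
  push_cast
  rw [logPrim, logPrim]
  set a := (n : ℝ)
  have ha0 : 0 < a := by linarith
  have key : (Real.log (a + 1) - (a + 1 - a) / a + 1) / a - (Real.log (a + 1) + 1) / (a + 1) -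
      Real.log (a + 1) / (a + 1) ^ 2 =
        (Real.log (a + 1) - (1 + 1 / a)) / (a * (a + 1) ^ 2) := by
    field_simp
    ring
  have h1 : 0 ≤ (Real.log (a + 1) - (1 + 1 / a)) / (a * (a + 1) ^ 2) :=
    div_nonneg (by linarith) (by positivity)
  have h2 : (Real.log (a + 1) - (a + 1 - a) / a + 1) / a ≤ (Real.log a + 1) / a :=
    div_le_div_of_nonneg_right (by linarith) ha0.le
  linarith

theorem le_logTail {q : ℕ} (hq : 3 ≤ q) : logPrim (q + 1) ≤ logTail q := by
  have hG : Tendsto (fun n : ℕ => logPrim ((n : ℝ) + 1)) atTop (𝓝 0) := by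
    refine ((tendsto_add_atTop_iff_nat 1).2 tendsto_logPrim).congr fun n => ?_
    push_cast
    rfl
  refine le_tail summable_log_div_sq hG fun n hn => ?_
  have hn3 : (3 : ℝ) ≤ n := by exact_mod_cast hq.trans hn
  push_cast
  rw [logPrim, logPrim]
  obtain ⟨b, hb⟩ : ∃ b : ℝ, b = n + 1 := ⟨_, rfl⟩
  rw [← hb]
  have hb0 : 0 < b := by linarith
  have h := log_le_log_add (a := b + 1) (b := b) (by linarith) hb0
  have h1 : 1 ≤ Real.log b := one_le_log (by linarith)
  have key : Real.log b / b ^ 2 - ((Real.log b + 1) / b -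
      (Real.log b - (b - (b + 1)) / (b + 1) + 1) / (b + 1)) =
        (Real.log b - 1 + Real.log b / b) / (b * (b + 1) ^ 2) := by
    field_simp
    ring
  have h2 : 0 ≤ (Real.log b - 1 + Real.log b / b) / (b * (b + 1) ^ 2) := by
    have : 0 ≤ Real.log b / b := by positivity
    exact div_nonneg (by linarith) (by positivity)
  have h3 : (Real.log b - (b - (b + 1)) / (b + 1) + 1) / (b + 1) ≤
      (Real.log (b + 1) + 1) / (b + 1) :=
    div_le_div_of_nonneg_right (by linarith) (by linarith)
  linarith

theorem abs_logTail_sub_le {z : ℝ} {q : ℕ} (hq : 3 ≤ q) (h1 : (q : ℝ) ≤ z) (h2 : z ≤ q + 1) :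
    |logTail q - logPrim z| ≤ Real.log z / (z * (z - 1)) := by
  have hq' : (3 : ℝ) ≤ q := by exact_mod_cast hq
  have hz : 0 < z := by linarith
  have hz1 : 0 < z - 1 := by linarith
  have hlog : 1 ≤ Real.log z := one_le_log (by linarith)
  rw [abs_le]
  constructor
  · have h3 := le_logTail hq
    obtain ⟨b, hb⟩ : ∃ b : ℝ, b = q + 1 := ⟨_, rfl⟩
    rw [← hb] at h2 h3
    have hb0 : 0 < b := by linarith
    have h4 := log_le_log_add hb0 hz
    have h5 : (Real.log z - (z - b) / b + 1) / b ≤ logPrim b :=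
      div_le_div_of_nonneg_right (by linarith) hb0.le
    have h6 : logPrim z - (Real.log z - (z - b) / b + 1) / b =
        Real.log z * ((b - z) / (z * b)) + (b - z) ^ 2 / (z * b ^ 2) := by
      rw [logPrim]
      field_simp
      ring
    have h7 : (b - z) / (z * b) ≤ 1 / (z * (z - 1)) - 1 / (z * (z - 1) * b) := by
      have : 1 / (z * (z - 1)) - 1 / (z * (z - 1) * b) = (b - 1) / (z * (z - 1) * b) := by
        field_simp
      rw [this, div_le_div_iff₀ (by positivity) (by positivity)]
      have : (b - z) * (z - 1) ≤ b - 1 := by nlinarith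
      nlinarith [mul_le_mul_of_nonneg_right this (mul_nonneg hz.le hb0.le)]
    have h8 : (b - z) ^ 2 / (z * b ^ 2) ≤ 1 / (z * (z - 1) * b) := by
      rw [div_le_div_iff₀ (by positivity) (by positivity)]
      have e1 : (b - z) ^ 2 ≤ 1 := by nlinarith
      have e2 : z * (z - 1) * b ≤ z * b ^ 2 := by
        nlinarith [mul_nonneg hz.le hb0.le]
      nlinarith [mul_nonneg (sub_nonneg.2 e1) (by positivity : 0 ≤ z * (z - 1) * b)]
    have h9 := mul_le_mul_of_nonneg_left h7 (by linarith : 0 ≤ Real.log z)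
    have h10 : 1 / (z * (z - 1) * b) ≤ Real.log z * (1 / (z * (z - 1) * b)) :=
      le_mul_of_one_le_left (by positivity) hlog
    rw [mul_sub] at h9
    rw [div_eq_mul_one_div (Real.log z)]
    linarith
  · have h3 := logTail_le hq
    have hq0 : (0 : ℝ) < q := by linarith
    have h4 := log_le_log_add hz hq0
    have h5 : logPrim q ≤ (Real.log z + (q - z) / z + 1) / q :=
      div_le_div_of_nonneg_right (by linarith) hq0.le
    have h6 : (Real.log z + (q - z) / z + 1) / q - logPrim z =
        Real.log z * ((z - q) / (q * z)) := by
      rw [logPrim]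
      field_simp
      ring
    have h7 : Real.log z * ((z - q) / (q * z)) ≤ Real.log z / (z * (z - 1)) := by
      rw [div_eq_mul_one_div (Real.log z)]
      refine mul_le_mul_of_nonneg_left ?_ (by linarith)
      rw [div_le_div_iff₀ (by positivity) (by positivity)]
      nlinarith [mul_nonneg hz.le hz1.le]
    linarith

theorem log_div_le_log_div {a b : ℝ} (ha : 3 ≤ a) (hab : a ≤ b) :
    Real.log b / b ≤ Real.log a / a := by
  have he : Real.exp 1 ≤ a := by linarith [Real.exp_one_lt_d9]
  exact Real.log_div_self_antitoneOn he (he.trans hab) hab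

theorem sum_vonMangoldt_mul_div (n : ℕ) :
    ∑ m ∈ Finset.Ioc 0 n, vonMangoldt m * ((n / m : ℕ) : ℝ) = Real.log n.factorial := by
  induction n with
  | zero => simp
  | succ n ih =>
    have h1 : ∑ m ∈ Finset.Ioc 0 (n + 1), vonMangoldt m * ((n / m : ℕ) : ℝ) =
        Real.log n.factorial := by
      rw [← ih, Finset.sum_Ioc_succ_top (Nat.zero_le n), Nat.div_eq_of_lt (Nat.lt_succ_self n)]
      simp
    have h2 : ∑ m ∈ Finset.Ioc 0 (n + 1), (if m ∣ n + 1 then vonMangoldt m else 0) =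
        Real.log ((n + 1 : ℕ) : ℝ) := by
      rw [← ArithmeticFunction.vonMangoldt_sum, ← Finset.sum_filter]
      refine Finset.sum_congr ?_ fun _ _ => rfl
      ext m
      simp only [Finset.mem_filter, Finset.mem_Ioc, Nat.mem_divisors]
      refine ⟨fun h => ⟨h.2, n.succ_ne_zero⟩, fun h => ⟨⟨?_, ?_⟩, h.1⟩⟩
      · exact Nat.pos_of_dvd_of_pos h.1 n.succ_pos
      · exact Nat.le_of_dvd n.succ_pos h.1
    rw [Nat.factorial_succ, Nat.cast_mul,
      Real.log_mul (by positivity) (by positivity), ← h1, ← h2, ← Finset.sum_add_distrib]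
    refine Finset.sum_congr rfl fun m _ => ?_
    rw [Nat.succ_div]
    split_ifs <;> push_cast <;> ring

theorem sum_vonMangoldt_mul_div_of_le {n K : ℕ} (h : n ≤ K) :
    ∑ m ∈ Finset.Ioc 0 K, vonMangoldt m * ((n / m : ℕ) : ℝ) = Real.log n.factorial := by
  rw [← sum_vonMangoldt_mul_div]
  refine (Finset.sum_subset (Finset.Ioc_subset_Ioc_right h) fun m hm hm' => ?_).symm
  rw [Finset.mem_Ioc] at hm hm'
  rw [Nat.div_eq_of_lt (by omega)]
  simp

theorem log_factorial_bounds {n : ℕ} (hn : 1 ≤ n) :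
    n * Real.log n - n + 1 ≤ Real.log n.factorial ∧
      Real.log n.factorial ≤ n * Real.log n - n + 1 + Real.log n := by
  induction n, hn using Nat.le_induction with
  | base => simp
  | succ n hn ih =>
    have hn' : (1 : ℝ) ≤ n := by exact_mod_cast hn
    rw [Nat.factorial_succ, Nat.cast_mul, Real.log_mul (by positivity) (by positivity)]
    push_cast
    have h1 := log_le_log_add (a := (n : ℝ)) (b := n + 1) (by linarith) (by linarith)
    have h2 := log_le_log_add (a := (n : ℝ) + 1) (b := n) (by linarith) (by linarith)
    have h3 : ((n : ℝ) + 1) * Real.log n ≤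
        (n + 1) * (Real.log (n + 1) + (n - (n + 1)) / (n + 1)) :=
      mul_le_mul_of_nonneg_left h2 (by linarith)
    have h4 : (n : ℝ) * Real.log (n + 1) ≤ n * (Real.log n + (n + 1 - n) / n) :=
      mul_le_mul_of_nonneg_left h1 (by linarith)
    have e3 : ((n : ℝ) + 1) * (Real.log (n + 1) + (n - (n + 1)) / (n + 1)) =
        (n + 1) * Real.log (n + 1) - 1 := by
      field_simp
      ring
    have e4 : (n : ℝ) * (Real.log n + (n + 1 - n) / n) = n * Real.log n + 1 := by
      field_simp
      ring
    constructor <;> nlinarith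

theorem log_factorial_div_bounds {N k : ℕ} (hk : 1 ≤ k) (hkN : k ≤ N) :
    (N / k : ℝ) * (Real.log N - Real.log k - 1) + 1 - Real.log N ≤ Real.log (N / k).factorial ∧
      Real.log (N / k).factorial ≤
        (N / k : ℝ) * (Real.log N - Real.log k - 1) + 1 + Real.log N := by
  have hj : 1 ≤ N / k := (Nat.one_le_div_iff (by omega)).2 hkN
  obtain ⟨h1, h2⟩ := log_factorial_bounds hj
  have hk' : (1 : ℝ) ≤ k := by exact_mod_cast hk
  have hN' : (1 : ℝ) ≤ N := by exact_mod_cast hk.trans hkN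
  have hj' : (1 : ℝ) ≤ ((N / k : ℕ) : ℝ) := by exact_mod_cast hj
  have hjz : ((N / k : ℕ) : ℝ) ≤ N / k := Nat.cast_div_le
  have hzj : (N / k : ℝ) ≤ ((N / k : ℕ) : ℝ) + 1 := by
    rw [div_le_iff₀ (by linarith)]
    rw [mul_comm]
    exact_mod_cast (Nat.lt_mul_div_succ N (by omega : 0 < k)).le
  rw [← Real.log_div (by linarith) (by linarith)]
  have hlogz : Real.log (N / k) ≤ Real.log N :=
    Real.log_le_log (by linarith) (div_le_self (by linarith) hk')
  generalize ((N / k : ℕ) : ℝ) = j at *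
  generalize (N / k : ℝ) = z at *
  have hz : 1 ≤ z := hj'.trans hjz
  have hlz : 0 ≤ Real.log z := Real.log_nonneg hz
  have hjlz : Real.log j ≤ Real.log z := Real.log_le_log (by linarith) hjz
  constructor
  · have h3 := mul_le_mul_of_nonneg_left
      (log_le_log_add (a := j) (b := z) (by linarith) (by linarith)) (by linarith : 0 ≤ j)
    have e3 : j * (Real.log j + (z - j) / j) = j * Real.log j + z - j := by
      field_simp
      ring
    nlinarith
  · have h3 := log_le_log_add (a := z) (b := 1) (by linarith) one_pos
    have e3 : (1 - z) / z = 1 / z - 1 := by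
      field_simp
    have e4 : 1 / z ≤ j / z := div_le_div_of_nonneg_right hj' (by linarith)
    rw [Real.log_one, e3] at h3
    have h4 := mul_le_mul_of_nonneg_left
      (log_le_log_add (a := z) (b := j) (by linarith) (by linarith)) (by linarith : 0 ≤ j)
    have e5 : j * (Real.log z + (j - z) / z) = j * Real.log z - (z - j) * (j / z) := by
      field_simp
      ring
    nlinarith [mul_nonneg (sub_nonneg.2 hjz) (by linarith : 0 ≤ Real.log z - 1 + j / z)]

/-- Chebyshev's inequality, in recursive form. -/
theorem psi_le_psi_div_add {N : ℕ} (hN : 30 ≤ N) :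
    Chebyshev.psi N ≤ Chebyshev.psi ((N / 6 : ℕ) : ℝ) +
      (14 * Real.log 2 + 9 * Real.log 3 + 5 * Real.log 5) / 30 * N + 5 * Real.log N := by
  have hpsi : Chebyshev.psi N ≤ Chebyshev.psi ((N / 6 : ℕ) : ℝ) +
      (Real.log (N / 1).factorial - Real.log (N / 2).factorial - Real.log (N / 3).factorial -
        Real.log (N / 5).factorial + Real.log (N / 30).factorial) := by
    rw [← sum_vonMangoldt_mul_div_of_le (Nat.div_le_self N 1),
      ← sum_vonMangoldt_mul_div_of_le (Nat.div_le_self N 2),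
      ← sum_vonMangoldt_mul_div_of_le (Nat.div_le_self N 3),
      ← sum_vonMangoldt_mul_div_of_le (Nat.div_le_self N 5),
      ← sum_vonMangoldt_mul_div_of_le (Nat.div_le_self N 30),
      ← Finset.sum_sub_distrib, ← Finset.sum_sub_distrib, ← Finset.sum_sub_distrib,
      ← Finset.sum_add_distrib, Chebyshev.psi, Chebyshev.psi, Nat.floor_natCast,
      Nat.floor_natCast]
    have h6 : ∑ m ∈ Finset.Ioc 0 (N / 6), vonMangoldt m =
        ∑ m ∈ Finset.Ioc 0 N, if m ≤ N / 6 then vonMangoldt m else 0 := by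
      rw [← Finset.sum_filter]
      refine Finset.sum_congr ?_ fun _ _ => rfl
      ext m
      simp only [Finset.mem_filter, Finset.mem_Ioc]
      omega
    rw [h6, ← Finset.sum_add_distrib]
    refine Finset.sum_le_sum fun m hm => ?_
    rw [Finset.mem_Ioc] at hm
    have hL : 0 ≤ vonMangoldt m := ArithmeticFunction.vonMangoldt_nonneg
    have hq : 1 ≤ N / m := (Nat.one_le_div_iff hm.1).2 hm.2
    rw [Nat.div_div_eq_div_mul, Nat.div_div_eq_div_mul, Nat.div_div_eq_div_mul,
      Nat.div_div_eq_div_mul, Nat.div_div_eq_div_mul, mul_comm 1, mul_comm 2, mul_comm 3,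
      mul_comm 5, mul_comm 30, ← Nat.div_div_eq_div_mul, ← Nat.div_div_eq_div_mul,
      ← Nat.div_div_eq_div_mul, ← Nat.div_div_eq_div_mul, ← Nat.div_div_eq_div_mul]
    have hm6 : m ≤ N / 6 ↔ 6 ≤ N / m := by
      rw [Nat.le_div_iff_mul_le (by norm_num), Nat.le_div_iff_mul_le hm.1, mul_comm]
    generalize N / m = q at *
    have key : 1 + q / 2 + q / 3 + q / 5 ≤ (if m ≤ N / 6 then 1 else 0) + q / 1 + q / 30 := by
      split_ifs with h <;> rw [hm6] at h <;> omega
    have key' : 1 + ((q / 2 : ℕ) : ℝ) + (q / 3 : ℕ) + (q / 5 : ℕ) ≤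
        (if m ≤ N / 6 then 1 else 0) + ((q / 1 : ℕ) : ℝ) + (q / 30 : ℕ) := by exact_mod_cast key
    have h7 := mul_le_mul_of_nonneg_left key' hL
    split_ifs at h7 ⊢ <;> linarith
  have h1 := (log_factorial_div_bounds (N := N) (k := 1) (by norm_num) (by omega)).2
  have h2 := (log_factorial_div_bounds (N := N) (k := 2) (by norm_num) (by omega)).1
  have h3 := (log_factorial_div_bounds (N := N) (k := 3) (by norm_num) (by omega)).1
  have h5 := (log_factorial_div_bounds (N := N) (k := 5) (by norm_num) (by omega)).1
  have h30 := (log_factorial_div_bounds (N := N) (k := 30) (by norm_num) (by omega)).2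
  have e30 : Real.log ((30 : ℕ) : ℝ) = Real.log 2 + Real.log 3 + Real.log 5 := by
    rw [← Real.log_mul (by norm_num) (by norm_num), ← Real.log_mul (by norm_num) (by norm_num)]
    norm_num
  rw [e30] at h30
  push_cast at h1 h2 h3 h5 h30
  rw [Real.log_one] at h1
  linarith

/-- `k n`, arranged so that evaluating it in the kernel first reduces `n` to a literal. -/
def force {α : Type} (n : ℕ) (k : ℕ → α) : α :=
  match n with
  | 0 => k 0
  | m + 1 => k (m + 1)

theorem force_eq {α : Type} (n : ℕ) (k : ℕ → α) : force n k = k n := by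
  cases n <;> rfl

/-- Apply the partial map `f` to `s` successively `2 ^ k` times. -/
def iteratePow (f : ℕ × ℕ × ℕ → Option (ℕ × ℕ × ℕ)) : ℕ → ℕ × ℕ × ℕ → Option (ℕ × ℕ × ℕ)
  | 0, s => f s
  | k + 1, s =>
    match iteratePow f k s with
    | none => none
    | some t => iteratePow f k t

/-- Whether `2 ^ k` iterations of `f` on `s` succeed and end with first component `n`. -/
def reaches (f : ℕ × ℕ × ℕ → Option (ℕ × ℕ × ℕ)) (k : ℕ) (s : ℕ × ℕ × ℕ) (n : ℕ) : Bool :=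
  match iteratePow f k s with
  | none => false
  | some t => Nat.beq t.1 n

theorem iteratePow_invariant {f : ℕ × ℕ × ℕ → Option (ℕ × ℕ × ℕ)} {I : ℕ × ℕ × ℕ → Prop}
    (hf : ∀ s t, I s → f s = some t → I t) {k : ℕ} {s t : ℕ × ℕ × ℕ} (hs : I s)
    (h : iteratePow f k s = some t) : I t := by
  induction k generalizing s t with
  | zero => exact hf s t hs h
  | succ k ih =>
    rw [iteratePow] at h
    split at h
    · simp at h
    · next u hu => exact ih (ih hs hu) h

theorem exists_of_reaches {f : ℕ × ℕ × ℕ → Option (ℕ × ℕ × ℕ)} {I : ℕ × ℕ × ℕ → Prop}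
    (hf : ∀ s t, I s → f s = some t → I t) {k : ℕ} {s : ℕ × ℕ × ℕ} {n : ℕ}
    (h : reaches f k s n = true) (hs : I s) : ∃ t, I t ∧ t.1 = n := by
  rw [reaches] at h
  split at h
  · simp at h
  · next t ht => exact ⟨t, iteratePow_invariant hf hs ht, Nat.eq_of_beq_eq_true h⟩

/-- One step `n ↦ n + 1` of the verification of `lcm(1, …, n) ^ 3 ≤ 2 ^ (5 n)`, on states
`(n, lcm(1, …, n), 2 ^ (5 n))`. -/
def lcmStep (s : ℕ × ℕ × ℕ) : Option (ℕ × ℕ × ℕ) :=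
  bif Nat.ble (s.2.1 ^ 3) s.2.2 then
    force (s.1 + 1) fun n => force (Nat.lcm n s.2.1) fun l => force (32 * s.2.2) fun b =>
      some (n, l, b)
  else none

theorem lcmUpto_succ (n : ℕ) : Nat.lcmUpto (n + 1) = Nat.lcm (n + 1) (Nat.lcmUpto n) := by
  rw [Nat.lcmUpto, ← Finset.insert_Icc_right_eq_Icc_add_one (by omega), Finset.lcm_insert]
  rfl

theorem lcmStep_reaches : reaches lcmStep 10 (0, 1, 1) 1024 = true := by decide +kernel

theorem lcmUpto_pow_le {n : ℕ} (hn : n < 1024) : Nat.lcmUpto n ^ 3 ≤ 2 ^ (5 * n) := by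
  let I : ℕ × ℕ × ℕ → Prop := fun s => s.2.1 = Nat.lcmUpto s.1 ∧ s.2.2 = 2 ^ (5 * s.1) ∧
    ∀ n < s.1, Nat.lcmUpto n ^ 3 ≤ 2 ^ (5 * n)
  have hI : ∀ s t, I s → lcmStep s = some t → I t := by
    rintro ⟨n, l, b⟩ t ⟨hl, hb, h⟩ ht
    simp only [lcmStep, force_eq] at ht hl hb h
    cases hc : Nat.ble (l ^ 3) b
    · simp [hc] at ht
    · rw [hc, cond_true, Option.some_inj] at ht
      subst ht
      refine ⟨by simp only [lcmUpto_succ, hl], by simp only [hb]; ring, fun m hm => ?_⟩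
      rcases (Nat.lt_succ_iff.1 hm).eq_or_lt with rfl | hm
      · exact hl ▸ hb ▸ Nat.le_of_ble_eq_true hc
      · exact h m hm
  obtain ⟨t, ⟨-, -, h⟩, ht⟩ := exists_of_reaches hI lcmStep_reaches ⟨rfl, rfl, by simp⟩
  exact h n (ht ▸ hn)

theorem psi_le (n : ℕ) : Chebyshev.psi n ≤ 5 / 3 * Real.log 2 * n := by
  induction n using Nat.strong_induction_on with
  | _ n ih =>
  rcases lt_or_ge n 1024 with hn | hn
  · have h : Nat.lcmUpto n ^ 3 ≤ 2 ^ (5 * n) := lcmUpto_pow_le hn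
    have h' : ((Nat.lcmUpto n : ℝ)) ^ 3 ≤ 2 ^ (5 * n) := by exact_mod_cast h
    have h0 : (0 : ℝ) < Nat.lcmUpto n := by exact_mod_cast Nat.lcmUpto_pos n
    have h2 := Real.log_le_log (by positivity) h'
    rw [Real.log_pow, Real.log_pow] at h2
    rw [Chebyshev.psi_eq_log_lcmUpto]
    push_cast at h2
    linarith
  · have h1 := psi_le_psi_div_add (N := n) (by omega)
    have h2 := ih (n / 6) (by omega)
    have h3 : ((n / 6 : ℕ) : ℝ) ≤ n / 6 := Nat.cast_div_le
    have hn' : (1024 : ℝ) ≤ n := by exact_mod_cast hn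
    have h4 := log_div_le_log_div (by norm_num) hn'
    have e4 : Real.log 1024 = 10 * Real.log 2 := by
      rw [show (1024 : ℝ) = 2 ^ 10 by norm_num, Real.log_pow]
      norm_num
    rw [e4, div_le_iff₀ (by linarith)] at h4
    have h5 : 10 * (14 * Real.log 2 + 9 * Real.log 3 + 5 * Real.log 5) ≤ 399 * Real.log 2 := by
      have h : ((2 : ℝ) ^ 14 * 3 ^ 9 * 5 ^ 5) ^ 10 ≤ (2 ^ 133) ^ 3 := by norm_num
      have h' := Real.log_le_log (by positivity) h
      rw [Real.log_pow, Real.log_pow, Real.log_mul (by positivity) (by positivity),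
        Real.log_mul (by positivity) (by positivity), Real.log_pow, Real.log_pow, Real.log_pow,
        Real.log_pow] at h'
      push_cast at h'
      linarith
    have hl : 0 < Real.log 2 := Real.log_pos one_lt_two
    have h6 := mul_le_mul_of_nonneg_right h5 (by linarith : (0 : ℝ) ≤ n)
    have h7 := mul_le_mul_of_nonneg_left h3 hl.le
    nlinarith [mul_nonneg hl.le (by linarith : (0 : ℝ) ≤ n)]

/-- The pairs `(k, e)` of a weighting of the integers with `e > 0`. The weights `± e` have sum zero
and make `∑ ± e * logTail (N / k) / k` nearly proportional to a tail of `∑ Λ(n) / n²`. -/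
def posWeights : List (ℕ × ℕ) :=
  [(1, 9999), (6, 1666), (10, 983), (14, 714), (15, 666), (20, 8), (21, 476), (22, 206), (26,
    384), (32, 59), (33, 296), (34, 229), (35, 137), (38, 144), (39, 143), (44, 104), (49, 33),
    (55, 86), (57, 75), (58, 46), (62, 142), (65, 7), (74, 6), (84, 74), (86, 76), (91, 18)]

/-- The pairs `(k, e)` for which the weight of `k` is `-e`. -/
def negWeights : List (ℕ × ℕ) :=
  [(2, 4998), (3, 3332), (5, 1999), (7, 1428), (11, 890), (13, 769), (16, 120), (17, 460), (19,
    526), (23, 185), (27, 6), (28, 249), (29, 62), (30, 358), (31, 294), (36, 83), (37, 31),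
    (42, 227), (43, 161), (45, 67), (47, 48), (53, 39), (60, 16), (64, 1), (66, 92), (69, 44),
    (71, 2), (73, 62), (78, 35), (79, 39), (80, 1), (83, 57), (98, 47), (99, 49)]

/-- The jumps `(j, d)` of the step function bounding the defect of the weights. -/
def jumps : List (ℕ × ℕ) :=
  [(19, 1), (29, 5), (42, 5), (43, 33), (71, 60), (73, 31), (200, 4), (241, 20), (661, 22),
    (773, 17), (863, 15), (1231, 19), (1879, 19), (4000, 1418)]

/-- `∑ e * g k` over the pairs `(k, e)` of a list. -/
noncomputable def wsum (l : List (ℕ × ℕ)) (g : ℕ → ℝ) : ℝ :=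
  (l.map fun w => (w.2 : ℝ) * g w.1).sum

@[simp]
theorem wsum_nil (g : ℕ → ℝ) : wsum [] g = 0 := rfl

@[simp]
theorem wsum_cons (w : ℕ × ℕ) (l : List (ℕ × ℕ)) (g : ℕ → ℝ) :
    wsum (w :: l) g = w.2 * g w.1 + wsum l g := rfl

theorem wsum_add (l : List (ℕ × ℕ)) (f g : ℕ → ℝ) :
    wsum l (fun k => f k + g k) = wsum l f + wsum l g := by
  induction l with
  | nil => simp
  | cons w l ih =>
    rw [wsum_cons, wsum_cons, wsum_cons, ih]
    ring

theorem wsum_mul (l : List (ℕ × ℕ)) (c : ℝ) (f : ℕ → ℝ) :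
    wsum l (fun k => c * f k) = c * wsum l f := by
  induction l with
  | nil => simp
  | cons w l ih =>
    rw [wsum_cons, wsum_cons, ih]
    ring

theorem wsum_mono {l : List (ℕ × ℕ)} {f g : ℕ → ℝ} (h : ∀ w ∈ l, f w.1 ≤ g w.1) :
    wsum l f ≤ wsum l g := by
  induction l with
  | nil => simp
  | cons w l ih =>
    rw [wsum_cons, wsum_cons]
    have h1 := mul_le_mul_of_nonneg_left (h w List.mem_cons_self) (Nat.cast_nonneg (α := ℝ) w.2)
    have h2 := ih fun v hv => h v (List.mem_cons_of_mem _ hv)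
    linarith

theorem hasSum_wsum {l : List (ℕ × ℕ)} {F : ℕ → ℕ → ℝ} {a : ℕ → ℝ}
    (h : ∀ k, HasSum (fun m => F m k) (a k)) : HasSum (fun m => wsum l (F m)) (wsum l a) := by
  induction l with
  | nil => exact hasSum_zero
  | cons w l ih => exact ((h w.1).mul_left _).add ih

/-- `∑ k * e` over the pairs `(k, e)` of a list with `k ∣ n`. -/
def divCoeff : List (ℕ × ℕ) → ℕ → ℕ
  | [], _ => 0
  | w :: l, n => bif Nat.beq (n % w.1) 0 then w.1 * w.2 + divCoeff l n else divCoeff l n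

/-- `∑ d` over the pairs `(j, d)` of a list with `j ≤ q`. -/
def stepSum : List (ℕ × ℕ) → ℕ → ℕ
  | [], _ => 0
  | w :: l, q => bif Nat.ble w.1 q then w.2 + stepSum l q else stepSum l q

/-- The sum of `(e / k) * sqTail (q / k)` over the pairs `(k, e)` of a list. -/
noncomputable def potential (l : List (ℕ × ℕ)) (q : ℕ) : ℝ := wsum l fun k => sqTail (q / k) / k

theorem potential_zero (l : List (ℕ × ℕ)) :
    potential l 0 = Real.pi ^ 2 / 6 * wsum l fun k => 1 / (k : ℝ) := by
  rw [← wsum_mul, potential]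
  simp only [Nat.zero_div, sqTail_zero, mul_one_div]

theorem potential_succ {l : List (ℕ × ℕ)} (hl : ∀ w ∈ l, 0 < w.1) (q : ℕ) :
    potential l (q + 1) = potential l q - divCoeff l (q + 1) / ((q : ℝ) + 1) ^ 2 := by
  induction l with
  | nil => simp [potential, divCoeff]
  | cons w l ih =>
    have hw : 0 < w.1 := hl w List.mem_cons_self
    have ih := ih fun v hv => hl v (List.mem_cons_of_mem _ hv)
    rw [potential, potential] at ih ⊢
    rw [wsum_cons, wsum_cons, ih, divCoeff, Nat.succ_div]
    by_cases h : w.1 ∣ q + 1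
    · have hb : Nat.beq ((q + 1) % w.1) 0 = true := by
        rw [Nat.mod_eq_zero_of_dvd h]
        rfl
      obtain ⟨c, hc⟩ := h
      have hq : q / w.1 + 1 = c := by
        have := Nat.succ_div (a := q) (b := w.1)
        rw [if_pos ⟨c, hc⟩, hc, Nat.mul_div_cancel_left _ hw] at this
        exact this.symm
      rw [hb, cond_true, if_pos ⟨c, hc⟩, sqTail_succ (q / w.1)]
      have h1 : ((q / w.1 : ℕ) : ℝ) + 1 = c := by exact_mod_cast hq
      have h2 : (q : ℝ) + 1 = w.1 * c := by exact_mod_cast hc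
      have hw' : (w.1 : ℝ) ≠ 0 := by exact_mod_cast hw.ne'
      have hc' : (c : ℝ) ≠ 0 := by
        rw [← h1]
        positivity
      rw [h1, h2]
      push_cast
      field_simp
      ring
    · have hb : Nat.beq ((q + 1) % w.1) 0 = false :=
        Bool.eq_false_iff.2 fun h' => h (Nat.dvd_of_mod_eq_zero (Nat.eq_of_beq_eq_true h'))
      rw [hb, cond_false, if_neg h, add_zero]
      ring

/-- One step `q ↦ q + 1` of a fixed-point verification of the defect bound for the weights, on
states `(q, P, Q)` for which `P - Q` is a lower bound for
`10 ^ 20 * (potential posWeights q - potential negWeights q)`. -/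
def defectStep (s : ℕ × ℕ × ℕ) : Option (ℕ × ℕ × ℕ) :=
  bif Nat.ble ((s.1 + 1) ^ 2 * (100 * s.2.2))
      ((s.1 + 1) ^ 2 * (100 * s.2.1) + 10 ^ 24 * stepSum jumps s.1) then
    force (s.1 + 1) fun n =>
    force (s.2.1 + 10 ^ 20 * divCoeff negWeights n / n ^ 2) fun P =>
    force (s.2.2 + 10 ^ 20 * divCoeff posWeights n / n ^ 2 + 1) fun Q =>
      some (n, P, Q)
  else none

theorem defectStep_reaches :
    reaches defectStep 12 (0, 1000087723594232247942508, 0) 4096 = true := by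
  decide +kernel

theorem potential_zero_gt : (1000087723594232247942508 : ℝ) ≤
    10 ^ 20 * (potential posWeights 0 - potential negWeights 0) := by
  rw [potential_zero, potential_zero, ← mul_sub]
  have h : (6079.804314044324577621388791974799 : ℝ) <
    wsum posWeights (fun k => 1 / (k : ℝ)) - wsum negWeights (fun k => 1 / (k : ℝ)) := by
    simp only [posWeights, negWeights, wsum_cons, wsum_nil]
    norm_num
  have hpi : (3.14159265358979323846 : ℝ) ^ 2 < Real.pi ^ 2 := by
    gcongr
    exact Real.pi_gt_d20
  nlinarith

theorem neg_stepSum_le_of_lt {k : ℕ} (hk : k < 4096) {y : ℝ} (hy0 : 0 ≤ y) (hy : y ≤ k + 1) :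
    -(100 * stepSum jumps k) ≤ y ^ 2 * (potential posWeights k - potential negWeights k) := by
  let I : ℕ × ℕ × ℕ → Prop := fun s =>
    (s.2.1 : ℝ) - s.2.2 ≤ 10 ^ 20 * (potential posWeights s.1 - potential negWeights s.1) ∧
    ∀ q < s.1, ∀ y : ℝ, 0 ≤ y → y ≤ q + 1 →
      -(100 * stepSum jumps q) ≤ y ^ 2 * (potential posWeights q - potential negWeights q)
  have hI : ∀ s t, I s → defectStep s = some t → I t := by
    rintro ⟨q, P, Q⟩ t ⟨hPQ, h⟩ ht
    simp only [defectStep, force_eq] at ht hPQ h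
    cases hc : Nat.ble ((q + 1) ^ 2 * (100 * Q))
      ((q + 1) ^ 2 * (100 * P) + 10 ^ 24 * stepSum jumps q)
    · rw [hc, cond_false] at ht
      simp at ht
    rw [hc, cond_true, Option.some_inj] at ht
    subst ht
    refine ⟨?_, fun k hk y hy0 hy => ?_⟩
    · have e1 : ((10 ^ 20 * divCoeff negWeights (q + 1) / (q + 1) ^ 2 : ℕ) : ℝ) ≤
          10 ^ 20 * divCoeff negWeights (q + 1) / ((q : ℝ) + 1) ^ 2 := by
        exact_mod_cast Nat.cast_div_le (α := ℝ)
          (m := 10 ^ 20 * divCoeff negWeights (q + 1)) (n := (q + 1) ^ 2)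
      have e2 : 10 ^ 20 * divCoeff posWeights (q + 1) / ((q : ℝ) + 1) ^ 2 ≤
          ((10 ^ 20 * divCoeff posWeights (q + 1) / (q + 1) ^ 2 : ℕ) : ℝ) + 1 := by
        rw [div_le_iff₀ (by positivity), mul_comm _ (((q : ℝ) + 1) ^ 2)]
        exact_mod_cast (Nat.lt_mul_div_succ (10 ^ 20 * divCoeff posWeights (q + 1))
          (by positivity : 0 < (q + 1) ^ 2)).le
      rw [potential_succ (by decide), potential_succ (by decide), Nat.cast_add, Nat.cast_add,
        Nat.cast_add, Nat.cast_one]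
      rw [mul_div_assoc] at e1 e2
      linarith
    · rcases (Nat.lt_succ_iff.1 hk).eq_or_lt with rfl | hk
      · have h3 : ((k : ℝ) + 1) ^ 2 * (100 * Q) ≤
            (k + 1) ^ 2 * (100 * P) + 10 ^ 24 * stepSum jumps k := by
          exact_mod_cast Nat.le_of_ble_eq_true hc
        have h4 : y ^ 2 ≤ ((k : ℝ) + 1) ^ 2 := by gcongr
        have hs : (0 : ℝ) ≤ stepSum jumps k := Nat.cast_nonneg _
        have h5 := mul_le_mul_of_nonneg_left hPQ (sq_nonneg y)
        rcases le_total (Q : ℝ) P with h6 | h6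
        · have h7 := mul_nonneg (sq_nonneg y) (sub_nonneg.2 h6)
          linarith
        · have h7 := mul_le_mul_of_nonneg_right h4 (sub_nonneg.2 h6)
          linarith
      · exact h k hk y hy0 hy
  obtain ⟨t, ⟨-, h⟩, ht⟩ := exists_of_reaches hI defectStep_reaches
    ⟨by simpa using potential_zero_gt, by simp⟩
  exact h k (ht ▸ hk) y hy0 hy

theorem stepSum_jumps {q : ℕ} (hq : 4000 ≤ q) : stepSum jumps q = 1669 := by
  have h : ∀ j ≤ 4000, Nat.ble j q = true := fun j hj => Nat.ble_eq_true_of_le (hj.trans hq)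
  simp only [jumps, stepSum]
  rw [h 19 (by norm_num)]
  simp [h]

theorem abs_sq_mul_potential_sub_le {l : List (ℕ × ℕ)} (hl : ∀ w ∈ l, 0 < w.1 ∧ w.1 < 100) {q : ℕ}
    (hq : 4000 ≤ q) {y : ℝ} (h1 : (q : ℝ) ≤ y) (h2 : y ≤ q + 1) :
    |y ^ 2 * potential l q - y * wsum l fun _ => 1| ≤ 0.51 * wsum l fun k => (k : ℝ) := by
  have key : ∀ w ∈ l, |y ^ 2 * (sqTail (q / w.1) / w.1) - y| ≤ 0.51 * (w.1 : ℝ) := by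
    intro w hw
    obtain ⟨hk, hk'⟩ := hl w hw
    have hk0 : (0 : ℝ) < w.1 := by exact_mod_cast hk
    have hJ : 40 ≤ q / w.1 := by
      rw [Nat.le_div_iff_mul_le hk]
      omega
    have h3 : ((q / w.1 : ℕ) : ℝ) ≤ y / w.1 :=
      Nat.cast_div_le.trans (div_le_div_of_nonneg_right h1 hk0.le)
    have h4 : y / w.1 ≤ ((q / w.1 : ℕ) : ℝ) + 1 := by
      rw [div_le_iff₀ hk0, mul_comm]
      refine h2.trans ?_
      exact_mod_cast Nat.lt_mul_div_succ q hk
    have h5 := abs_sq_mul_sqTail_sub_le hJ h3 h4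
    have h6 : y ^ 2 * (sqTail (q / w.1) / w.1) - y =
        ((y / w.1) ^ 2 * sqTail (q / w.1) - y / w.1) * w.1 := by
      field_simp
    rw [h6, abs_mul, abs_of_pos hk0]
    exact mul_le_mul_of_nonneg_right h5 hk0.le
  rw [← wsum_mul, ← wsum_mul, potential, ← wsum_mul, abs_le]
  constructor
  · rw [neg_le_sub_iff_le_add, ← wsum_add]
    exact wsum_mono fun w hw => by linarith [(abs_le.1 (key w hw)).1]
  · rw [sub_le_iff_le_add, ← wsum_add]
    exact wsum_mono fun w hw => by linarith [(abs_le.1 (key w hw)).2]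

/-- The defect of the weights is bounded by the step function of `jumps`. -/
theorem neg_stepSum_le (q : ℕ) {y : ℝ} (h1 : (q : ℝ) ≤ y) (h2 : y ≤ q + 1) :
    -(100 * stepSum jumps q) ≤ y ^ 2 * (potential posWeights q - potential negWeights q) := by
  rcases lt_or_ge q 4000 with hq | hq
  · exact neg_stepSum_le_of_lt (by omega) ((Nat.cast_nonneg q).trans h1) h2
  · have hp := (abs_le.1 (abs_sq_mul_potential_sub_le (l := posWeights) (by decide) hq h1 h2)).1
    have hn := (abs_le.1 (abs_sq_mul_potential_sub_le (l := negWeights) (by decide) hq h1 h2)).2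
    have e1 : wsum posWeights (fun _ => 1) = wsum negWeights (fun _ => 1) := by
      simp only [posWeights, negWeights, wsum_cons, wsum_nil]
      norm_num
    have e2 : wsum posWeights (fun k => (k : ℝ)) + wsum negWeights (fun k => (k : ℝ)) = 327082 := by
      simp only [posWeights, negWeights, wsum_cons, wsum_nil]
      norm_num
    rw [stepSum_jumps hq]
    rw [e1] at hp
    push_cast
    linarith

theorem hasSum_potential (l : List (ℕ × ℕ)) (N : ℕ) :
    HasSum (fun m : ℕ => vonMangoldt m / (m : ℝ) ^ 2 * potential l (N / m))
      (wsum l fun k => logTail (N / k) / k) := by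
  simp only [potential, ← wsum_mul]
  refine hasSum_wsum fun k => ?_
  have h := (hasSum_logTail (N / k)).div_const (k : ℝ)
  simp only [mul_div_assoc] at h
  simpa only [Nat.div_div_eq_div_mul, mul_comm k] using h

theorem sum_mul_stepSum {l : List (ℕ × ℕ)} (hl : ∀ w ∈ l, 0 < w.1) (N : ℕ) :
    ∑ m ∈ Finset.Ioc 0 N, vonMangoldt m * (stepSum l (N / m) : ℝ) =
      wsum l fun j => Chebyshev.psi ((N / j : ℕ) : ℝ) := by
  induction l with
  | nil => simp [stepSum]
  | cons w l ih =>
    have hw : 0 < w.1 := hl w List.mem_cons_self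
    rw [wsum_cons, ← ih fun v hv => hl v (List.mem_cons_of_mem _ hv), Chebyshev.psi,
      Nat.floor_natCast, Finset.mul_sum]
    have h : ∑ m ∈ Finset.Ioc 0 (N / w.1), (w.2 : ℝ) * vonMangoldt m =
        ∑ m ∈ Finset.Ioc 0 N, if m ≤ N / w.1 then (w.2 : ℝ) * vonMangoldt m else 0 := by
      rw [← Finset.sum_filter]
      refine Finset.sum_congr ?_ fun _ _ => rfl
      ext m
      have := Nat.div_le_self N w.1
      simp only [Finset.mem_filter, Finset.mem_Ioc]
      omega
    rw [h, ← Finset.sum_add_distrib]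
    refine Finset.sum_congr rfl fun m hm => ?_
    rw [Finset.mem_Ioc] at hm
    have hiff : m ≤ N / w.1 ↔ w.1 ≤ N / m := by
      rw [Nat.le_div_iff_mul_le hw, Nat.le_div_iff_mul_le hm.1, mul_comm]
    rw [stepSum]
    by_cases hle : w.1 ≤ N / m
    · rw [if_pos (hiff.2 hle), Nat.ble_eq_true_of_le hle, cond_true]
      push_cast
      ring
    · have hb : Nat.ble w.1 (N / m) = false :=
        Bool.eq_false_iff.2 fun h' => hle (Nat.le_of_ble_eq_true h')
      rw [if_neg fun h' => hle (hiff.1 h'), hb, cond_false, zero_add]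

theorem mul_vonMangoldtTail_le_wsum {N : ℕ} (hN : 0 < N) :
    10000 * vonMangoldtTail N ≤ wsum posWeights (fun k => logTail (N / k) / k) -
      wsum negWeights (fun k => logTail (N / k) / k) +
        100 / (N : ℝ) ^ 2 * wsum jumps fun j => Chebyshev.psi ((N / j : ℕ) : ℝ) := by
  have hN0 : (0 : ℝ) < N := by exact_mod_cast hN
  have h1 := (hasSum_potential posWeights N).sub (hasSum_potential negWeights N)
  have h2 := ((summable_ite_lt summable_vonMangoldt_div_sq N).hasSum.mul_left 10000).sub
    ((hasSum_sum_of_ne_finset_zero (s := Finset.Ioc 0 N)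
      (f := fun m => if m ∈ Finset.Ioc 0 N then vonMangoldt m * (stepSum jumps (N / m) : ℝ) else 0)
      fun m hm => if_neg hm).mul_left (100 / (N : ℝ) ^ 2))
  rw [Finset.sum_congr rfl fun m hm => if_pos hm, sum_mul_stepSum (by decide)] at h2
  have h3 := hasSum_le (fun m => ?_) h2 h1
  · change 10000 * vonMangoldtTail N - _ ≤ _ at h3
    linarith
  rw [← mul_sub]
  rcases Nat.eq_zero_or_pos m with rfl | hm
  · simp
  have hm0 : (0 : ℝ) < m := by exact_mod_cast hm
  have hL : 0 ≤ vonMangoldt m := ArithmeticFunction.vonMangoldt_nonneg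
  rcases lt_or_ge N m with h | h
  · rw [if_pos h, if_neg (by simp [h]), mul_zero, sub_zero, Nat.div_eq_of_lt h, mul_comm]
    refine mul_le_mul_of_nonneg_left ?_ (by positivity)
    linarith [potential_zero_gt]
  · rw [if_neg (by omega), if_pos (Finset.mem_Ioc.2 ⟨hm, h⟩), mul_zero, zero_sub]
    have hy1 : ((N / m : ℕ) : ℝ) ≤ N / m := Nat.cast_div_le
    have hy2 : (N / m : ℝ) ≤ ((N / m : ℕ) : ℝ) + 1 := by
      rw [div_le_iff₀ hm0, mul_comm]
      exact_mod_cast (Nat.lt_mul_div_succ N hm).le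
    have h4 := mul_le_mul_of_nonneg_left (neg_stepSum_le (N / m) hy1 hy2)
      (by positivity : 0 ≤ vonMangoldt m / (N : ℝ) ^ 2)
    refine le_trans (le_of_eq ?_) (h4.trans (le_of_eq ?_)) <;> field_simp

theorem abs_mul_logTail_sub_le {N k : ℕ} (hk : 0 < k) (hk' : k < 100) (hN : 300 ≤ N) :
    |N * (logTail (N / k) / k) - (Real.log N + 1 - Real.log k)| ≤
      Real.log N / (N - 100) * k := by
  have hk0 : (0 : ℝ) < k := by exact_mod_cast hk
  have hk1 : (1 : ℝ) ≤ k := by exact_mod_cast hk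
  have hk2 : (k : ℝ) < 100 := by exact_mod_cast hk'
  have hN0 : (300 : ℝ) ≤ N := by exact_mod_cast hN
  have hJ : 3 ≤ N / k := by
    rw [Nat.le_div_iff_mul_le hk]
    omega
  have hy2 : (N / k : ℝ) ≤ ((N / k : ℕ) : ℝ) + 1 := by
    rw [div_le_iff₀ hk0, mul_comm]
    exact_mod_cast (Nat.lt_mul_div_succ N hk).le
  have h := abs_logTail_sub_le hJ Nat.cast_div_le hy2
  have e1 : N * (logTail (N / k) / k) - (Real.log N + 1 - Real.log k) =
      (N / k : ℝ) * (logTail (N / k) - logPrim (N / k)) := by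
    rw [logPrim, Real.log_div (by positivity) (by positivity)]
    field_simp
    ring
  rw [e1, abs_mul, abs_of_pos (by positivity)]
  refine (mul_le_mul_of_nonneg_left h (by positivity)).trans ?_
  have hNk : 0 < (N : ℝ) - k := by linarith
  have e2 : (N / k : ℝ) * (Real.log (N / k) / (N / k * (N / k - 1))) =
      Real.log (N / k) / (N - k) * k := by
    have : (N / k : ℝ) - 1 = (N - k) / k := by field_simp
    rw [this]
    field_simp
  rw [e2]
  have h3 : Real.log (N / k) ≤ Real.log N :=
    Real.log_le_log (by positivity) (div_le_self (by linarith) hk1)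
  have h4 : 0 ≤ Real.log N := Real.log_natCast_nonneg N
  refine mul_le_mul_of_nonneg_right ?_ hk0.le
  exact div_le_div₀ h4 h3 (by linarith) (by linarith)

/-- `∏ k ^ e` over the pairs `(k, e)` of a list. -/
def prodPow : List (ℕ × ℕ) → ℕ
  | [] => 1
  | w :: l => w.1 ^ w.2 * prodPow l

theorem wsum_log {l : List (ℕ × ℕ)} (hl : ∀ w ∈ l, 0 < w.1) :
    0 < prodPow l ∧ wsum l (fun k => Real.log k) = Real.log (prodPow l) := by
  induction l with
  | nil => simp [prodPow]
  | cons w l ih =>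
    obtain ⟨h0, h1⟩ := ih fun v hv => hl v (List.mem_cons_of_mem _ hv)
    have hw : 0 < w.1 := hl w List.mem_cons_self
    have hw' : 0 < w.1 ^ w.2 := by positivity
    refine ⟨Nat.mul_pos hw' h0, ?_⟩
    rw [wsum_cons, h1, prodPow, Nat.cast_mul, Nat.cast_pow,
      Real.log_mul (by positivity) (by positivity), Real.log_pow]

theorem prodPow_le : Nat.ble (prodPow negWeights) (2 ^ 14496 * prodPow posWeights) = true := by
  decide +kernel

theorem wsum_log_le :
    wsum negWeights (fun k => Real.log k) - wsum posWeights (fun k => Real.log k) ≤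
      14496 * Real.log 2 := by
  obtain ⟨hp, hp'⟩ := wsum_log (l := posWeights) (by decide)
  obtain ⟨hn, hn'⟩ := wsum_log (l := negWeights) (by decide)
  rw [hp', hn', sub_le_iff_le_add]
  have h : (prodPow negWeights : ℝ) ≤ 2 ^ 14496 * prodPow posWeights := by
    exact_mod_cast Nat.le_of_ble_eq_true prodPow_le
  have h1 := Real.log_le_log (by exact_mod_cast hn) h
  rw [Real.log_mul (pow_ne_zero _ two_ne_zero) (by positivity), Real.log_pow] at h1
  exact_mod_cast h1

theorem mul_vonMangoldtTail_le {N : ℕ} (hN : 32768 ≤ N) : N * vonMangoldtTail N ≤ 1.0495 := by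
  have hN0 : (32768 : ℝ) ≤ N := by exact_mod_cast hN
  have hNpos : (0 : ℝ) < N := by linarith
  have h := mul_le_mul_of_nonneg_left (mul_vonMangoldtTail_le_wsum (N := N) (by omega)) hNpos.le
  have hpos : N * wsum posWeights (fun k => logTail (N / k) / k) ≤
      (Real.log N + 1) * wsum posWeights (fun _ => 1) - wsum posWeights (fun k => Real.log k) +
        Real.log N / (N - 100) * wsum posWeights (fun k => (k : ℝ)) := by
    rw [← wsum_mul, ← wsum_mul, ← wsum_mul, sub_add_eq_add_sub, le_sub_iff_add_le, ← wsum_add,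
      ← wsum_add]
    refine wsum_mono fun w hw => ?_
    obtain ⟨h1, h2⟩ : 0 < w.1 ∧ w.1 < 100 :=
      (by decide : ∀ w ∈ posWeights, 0 < w.1 ∧ w.1 < 100) w hw
    linarith [(abs_le.1 (abs_mul_logTail_sub_le h1 h2 (by omega : 300 ≤ N))).2]
  have hneg : (Real.log N + 1) * wsum negWeights (fun _ => 1) -
      wsum negWeights (fun k => Real.log k) -
        Real.log N / (N - 100) * wsum negWeights (fun k => (k : ℝ)) ≤
      N * wsum negWeights (fun k => logTail (N / k) / k) := by
    rw [← wsum_mul, ← wsum_mul, ← wsum_mul, sub_sub, sub_le_iff_le_add, ← wsum_add, ← wsum_add]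
    refine wsum_mono fun w hw => ?_
    obtain ⟨h1, h2⟩ : 0 < w.1 ∧ w.1 < 100 :=
      (by decide : ∀ w ∈ negWeights, 0 < w.1 ∧ w.1 < 100) w hw
    linarith [(abs_le.1 (abs_mul_logTail_sub_le h1 h2 (by omega : 300 ≤ N))).1]
  have e1 : wsum posWeights (fun _ => 1) = wsum negWeights (fun _ => 1) := by
    simp only [posWeights, negWeights, wsum_cons, wsum_nil]
    norm_num
  have e2 : wsum posWeights (fun k => (k : ℝ)) + wsum negWeights (fun k => (k : ℝ)) = 327082 := by
    simp only [posWeights, negWeights, wsum_cons, wsum_nil]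
    norm_num
  have hjumps : wsum jumps (fun j => Chebyshev.psi ((N / j : ℕ) : ℝ)) ≤
      5 / 3 * Real.log 2 * N * 2.937 := by
    have hC : wsum jumps (fun j => 1 / (j : ℝ)) ≤ 2.937 := by
      simp only [jumps, wsum_cons, wsum_nil]
      norm_num
    refine le_trans ?_ (mul_le_mul_of_nonneg_left hC (by positivity))
    rw [← wsum_mul]
    refine wsum_mono fun w _ => (psi_le _).trans ?_
    rw [mul_one_div, mul_div_assoc]
    exact mul_le_mul_of_nonneg_left Nat.cast_div_le (by positivity)
  have hlog : Real.log N / (N - 100) ≤ 15 * Real.log 2 / 32668 := by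
    have h4 := log_div_le_log_div (by norm_num) hN0
    have e4 : Real.log 32768 = 15 * Real.log 2 := by
      rw [show (32768 : ℝ) = 2 ^ 15 by norm_num, Real.log_pow]
      norm_num
    rw [e4, div_le_iff₀ hNpos] at h4
    rw [div_le_iff₀ (by linarith)]
    have hl : 0 < Real.log 2 := Real.log_pos one_lt_two
    nlinarith
  have hl2 := Real.log_two_lt_d9
  have h5 : (N : ℝ) * (100 / (N : ℝ) ^ 2 * wsum jumps fun j => Chebyshev.psi ((N / j : ℕ) : ℝ)) ≤
      100 * (5 / 3 * Real.log 2 * 2.937) := by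
    refine (mul_le_mul_of_nonneg_left (mul_le_mul_of_nonneg_left hjumps (by positivity))
      hNpos.le).trans (le_of_eq ?_)
    field_simp
  rw [e1] at hpos
  have h6 := wsum_log_le
  nlinarith

/-- The summand `log n / (n² - 1)`, restricted to primes. -/
noncomputable def primeTerm (n : ℕ) : ℝ :=
  if n.Prime then Real.log n / ((n : ℝ) ^ 2 - 1) else 0

/-- The tail `∑_{p > q} log p / (p² - 1)`. -/
noncomputable def primeTail (q : ℕ) : ℝ := ∑' n : ℕ, if q < n then primeTerm n else 0

theorem primeTerm_nonneg (n : ℕ) : 0 ≤ primeTerm n := by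
  rw [primeTerm]
  split_ifs with h
  · have h1 : (1 : ℝ) ≤ n := by exact_mod_cast h.one_lt.le
    exact div_nonneg (Real.log_natCast_nonneg n) (by nlinarith)
  · exact le_rfl

theorem primeTerm_le {q n : ℕ} (hq : 0 < q) (hn : q < n) :
    primeTerm n ≤ (1 + 1 / (q : ℝ)) * (vonMangoldt n / (n : ℝ) ^ 2) := by
  have hq' : (1 : ℝ) ≤ q := by exact_mod_cast hq
  have hn' : (q : ℝ) + 1 ≤ n := by exact_mod_cast hn
  rw [primeTerm]
  split_ifs with h
  · have hlog : 0 ≤ Real.log n := Real.log_natCast_nonneg n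
    rw [ArithmeticFunction.vonMangoldt_apply_prime h, mul_div_assoc', one_add_div (by positivity),
      div_mul_eq_mul_div, div_div, div_le_div_iff₀ (by nlinarith)
        (mul_pos (by linarith) (pow_pos (by linarith) 2))]
    have h1 : (q : ℝ) * n ^ 2 ≤ (q + 1) * (n ^ 2 - 1) := by nlinarith
    nlinarith
  · exact mul_nonneg (by positivity)
      (div_nonneg ArithmeticFunction.vonMangoldt_nonneg (by positivity))

theorem summable_primeTerm : Summable primeTerm := by
  refine (summable_vonMangoldt_div_sq.mul_left (1 + 1 / ((1 : ℕ) : ℝ))).of_nonneg_of_le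
    primeTerm_nonneg fun n => ?_
  rcases lt_or_ge 1 n with hn | hn
  · exact primeTerm_le one_pos hn
  · rw [primeTerm, if_neg fun h => hn.not_gt h.one_lt]
    exact mul_nonneg (by positivity)
      (div_nonneg ArithmeticFunction.vonMangoldt_nonneg (by positivity))

theorem primeTail_eq_add (q : ℕ) : primeTail q = primeTerm (q + 1) + primeTail (q + 1) := by
  rw [primeTail, primeTail, tsum_ite_lt summable_primeTerm, tsum_ite_lt summable_primeTerm,
    ((summable_nat_add_iff (q + 1)).2 summable_primeTerm).tsum_eq_zero_add, zero_add]
  simp only [add_assoc, add_comm 1 (q + 1)]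

theorem primeTail_le {q : ℕ} (hq : 0 < q) :
    primeTail q ≤ (1 + 1 / (q : ℝ)) * vonMangoldtTail q := by
  rw [primeTail, vonMangoldtTail, ← tsum_mul_left]
  refine (summable_ite_lt summable_primeTerm q).tsum_le_tsum (fun n => ?_)
    ((summable_ite_lt summable_vonMangoldt_div_sq q).mul_left _)
  split_ifs with hn
  · exact primeTerm_le hq hn
  · rw [mul_zero]

theorem mul_primeTail_le {q : ℕ} (hq : 32768 ≤ q) : q * primeTail q ≤ 1.0496 := by
  have hq' : (32768 : ℝ) ≤ q := by exact_mod_cast hq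
  have h1 := mul_le_mul_of_nonneg_left (primeTail_le (by omega : 0 < q)) (by linarith : (0 : ℝ) ≤ q)
  have h2 := mul_vonMangoldtTail_le hq
  have h3 : 1 / (q : ℝ) ≤ 1 / 32768 := one_div_le_one_div_of_le (by norm_num) hq'
  have h4 : 0 ≤ 1 / (q : ℝ) := by positivity
  nlinarith

theorem log_pred_le {n : ℕ} (hn : 2 ≤ n) :
    Real.log (n - 1 : ℕ) ≤ Real.log n - 2 / (2 * (n : ℝ) - 1) := by
  obtain ⟨m, rfl⟩ : ∃ m, n = m + 1 := ⟨n - 1, by omega⟩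
  have hm : (0 : ℝ) < m := by exact_mod_cast (by omega : 0 < m)
  have h := (Real.hasSum_log_one_add_inv hm)
  have h1 := le_hasSum h 0 fun k _ => by positivity
  rw [← one_div, one_add_div hm.ne', Real.log_div (by positivity) hm.ne'] at h1
  rw [Nat.add_sub_cancel]
  push_cast
  norm_num at h1
  have e : 2 * ((m : ℝ) + 1) - 1 = 2 * m + 1 := by ring
  rw [e, div_eq_mul_inv]
  linarith

/-- A compositeness test; below `32768` it is false exactly at the composite numbers. -/
def maybePrime (n : ℕ) : Bool :=
  bif Nat.ble n 3 then true
  else bif Nat.ble n 13 then Nat.beq (Nat.gcd n (Nat.factorial 3)) 1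
  else bif Nat.ble n 181 then Nat.beq (Nat.gcd n (Nat.factorial 13)) 1
  else Nat.beq (Nat.gcd n (Nat.factorial 181)) 1

theorem maybePrime_of_prime {n : ℕ} (h : n.Prime) : maybePrime n = true := by
  have key : ∀ k, Nat.ble n k = false → Nat.beq (Nat.gcd n k.factorial) 1 = true := fun k hk =>
    Nat.beq_eq ▸ (h.coprime_iff_not_dvd.2 (h.dvd_factorial.not.2 fun h' =>
      Bool.false_ne_true (hk ▸ Nat.ble_eq_true_of_le h')))
  rw [maybePrime]
  cases h3 : Nat.ble n 3
  · cases h13 : Nat.ble n 13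
    · cases h181 : Nat.ble n 181
      · exact key 181 h181
      · exact key 13 h13
    · exact key 3 h3
  · rfl

/-- One step `n ↦ n - 1` of a fixed-point verification of the bound for `primeTail`, on states
`(n, L, S)` such that `L` and `S` are upper bounds for `10 ^ 20 * log n` and
`10 ^ 20 * primeTail n`. -/
def tailStep (s : ℕ × ℕ × ℕ) : Option (ℕ × ℕ × ℕ) :=
  bif Nat.ble s.1 2 then some s else
  bif Nat.blt (1000 * ((s.1 + 1) * s.2.2)) (1053 * 10 ^ 20) then
    force (s.1 - 1) fun n =>
    force (s.2.1 - 2 * 10 ^ 20 / (2 * s.1 - 1)) fun L =>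
    force (bif maybePrime s.1 then s.2.2 + s.2.1 / (s.1 ^ 2 - 1) + 1 else s.2.2) fun S =>
      some (n, L, S)
  else none

theorem tailStep_reaches :
    reaches tailStep 15 (32768, 1039720771200000000000, 3203125000000000) 2 = true := by
  decide +kernel

theorem mul_primeTail_lt {m : ℕ} (hm : 3 ≤ m) : (m + 1) * primeTail m < 1.053 := by
  rcases le_or_gt 32768 m with hm' | hm'
  · have h1 := mul_primeTail_le hm'
    have h2 : (32768 : ℝ) ≤ m := by exact_mod_cast hm'
    nlinarith
  let I : ℕ × ℕ × ℕ → Prop := fun s =>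
    (2 ≤ s.1 ∧ 10 ^ 20 * Real.log s.1 ≤ s.2.1 ∧ 10 ^ 20 * primeTail s.1 ≤ s.2.2) ∧
    ∀ m : ℕ, s.1 < m → m ≤ 32768 → (m + 1) * primeTail m < 1.053
  have hI : ∀ s t, I s → tailStep s = some t → I t := by
    rintro ⟨n, L, S⟩ t ⟨⟨hn, hL, hS⟩, h⟩ ht
    simp only [tailStep, force_eq] at ht hn hL hS h
    cases hc2 : Nat.ble n 2
    · rw [hc2, cond_false] at ht
      have hn2 : 2 < n := lt_of_not_ge fun h' =>
        Bool.false_ne_true (hc2 ▸ Nat.ble_eq_true_of_le h')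
      cases hc : Nat.blt (1000 * ((n + 1) * S)) (1053 * 10 ^ 20)
      · rw [hc, cond_false] at ht
        simp at ht
      rw [hc, cond_true, Option.some_inj] at ht
      subst ht
      have hn' : (3 : ℝ) ≤ n := by exact_mod_cast hn2
      have hn1 : n - 1 + 1 = n := by omega
      refine ⟨⟨by simp only; omega, ?_, ?_⟩, fun m hm hm' => ?_⟩
      · have h1 := log_pred_le hn
        have h2 : ((2 * 10 ^ 20 / (2 * n - 1) : ℕ) : ℝ) ≤ 2 * 10 ^ 20 / (2 * (n : ℝ) - 1) := by
          refine Nat.cast_div_le.trans (le_of_eq ?_)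
          rw [Nat.cast_sub (by omega)]
          norm_num
        have h3 : (L : ℝ) ≤ ((L - 2 * 10 ^ 20 / (2 * n - 1) : ℕ) : ℝ) +
            ((2 * 10 ^ 20 / (2 * n - 1) : ℕ) : ℝ) := by
          exact_mod_cast Nat.sub_le_iff_le_add.1 le_rfl
        rw [mul_div_right_comm] at h2
        simp only
        linarith
      · simp only
        rw [primeTail_eq_add, hn1, primeTerm]
        split_ifs with hp
        · rw [maybePrime_of_prime hp, cond_true]
          have h1 : 1 ≤ n ^ 2 := Nat.one_le_pow _ _ (by omega)
          have h2 : 0 < n ^ 2 - 1 := by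
            have : 2 ^ 2 ≤ n ^ 2 := Nat.pow_le_pow_left hn 2
            omega
          have h3 : (L : ℝ) ≤ ((n ^ 2 - 1 : ℕ) : ℝ) * ((L / (n ^ 2 - 1) : ℕ) + 1) := by
            exact_mod_cast (Nat.lt_mul_div_succ L h2).le
          have h4 : ((n ^ 2 - 1 : ℕ) : ℝ) = (n : ℝ) ^ 2 - 1 := by
            rw [Nat.cast_sub h1]
            push_cast
            rfl
          have h5 : 10 ^ 20 * (Real.log n / ((n : ℝ) ^ 2 - 1)) ≤ (L / (n ^ 2 - 1) : ℕ) + 1 := by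
            rw [← mul_div_assoc, div_le_iff₀ (by nlinarith), mul_comm _ ((n : ℝ) ^ 2 - 1), ← h4]
            exact hL.trans h3
          rw [Nat.cast_add, Nat.cast_add, Nat.cast_one]
          linarith
        · rw [zero_add]
          refine hS.trans ?_
          exact_mod_cast (by cases maybePrime n <;> simp [add_assoc] :
            S ≤ bif maybePrime n then S + L / (n ^ 2 - 1) + 1 else S)
      · simp only at hm
        rcases (by omega : m = n ∨ n < m) with rfl | hm
        · have h1 : 1000 * (((m : ℝ) + 1) * S) < 1053 * 10 ^ 20 := by
            exact_mod_cast Nat.blt_eq ▸ hc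
          have h2 := mul_le_mul_of_nonneg_left hS (by linarith : (0 : ℝ) ≤ m + 1)
          linarith
        · exact h m hm hm'
    · rw [hc2, cond_true, Option.some_inj] at ht
      exact ht ▸ ⟨⟨hn, hL, hS⟩, h⟩
  have hI0 : I (32768, 1039720771200000000000, 3203125000000000) := by
    refine ⟨⟨by norm_num, ?_, ?_⟩, fun m h h' => absurd h' h.not_ge⟩
    · have e : Real.log ((32768 : ℕ) : ℝ) = 15 * Real.log 2 := by
        rw [show ((32768 : ℕ) : ℝ) = 2 ^ 15 by norm_num, Real.log_pow]
        norm_num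
      have := Real.log_two_lt_d9
      simp only
      rw [e]
      push_cast
      linarith
    · have h := mul_primeTail_le (le_refl 32768)
      simp only
      push_cast at h ⊢
      linarith
  obtain ⟨t, ⟨-, h⟩, ht⟩ := exists_of_reaches hI tailStep_reaches hI0
  exact h m (by omega) hm'.le

theorem tsum_primes_eq_primeTail {x : ℝ} (hx : 0 ≤ x) :
    (∑' p : Nat.Primes, if x < (p : ℕ) then Real.log p / ((p : ℝ) ^ 2 - 1) else 0) =
      primeTail ⌊x⌋₊ := by
  rw [primeTail, ← tsum_subtype_eq_of_support_subset (s := {p : ℕ | p.Prime})]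
  · refine tsum_congr fun p => ?_
    rw [primeTerm, if_pos p.2]
    simp only [Nat.floor_lt hx]
  · intro n hn
    by_contra h
    exact hn (by simp [primeTerm, if_neg (show ¬ n.Prime from h)])

end PrimeTail

/-- For every real `x ≥ 3`, `∑_{p > x} (log p)/(p²−1) < 1.053/x`. -/
theorem statement17 (x : ℝ) (hx : 3 ≤ x) :
    (∑' p : Nat.Primes, if x < (p : ℕ) then Real.log p / ((p : ℝ) ^ 2 - 1) else 0) <
      1.053 / x := by
  have hx0 : 0 < x := by linarith
  rw [PrimeTail.tsum_primes_eq_primeTail hx0.le, lt_div_iff₀ hx0, mul_comm]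
  refine lt_of_le_of_lt (mul_le_mul_of_nonneg_right (Nat.lt_floor_add_one x).le ?_)
    (PrimeTail.mul_primeTail_lt (Nat.le_floor hx))
  exact tsum_nonneg fun n => by
    split_ifs
    exacts [PrimeTail.primeTerm_nonneg n, le_rfl]
end
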